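/- Let a, b, c be positive integers each of which is a perfect square, and let Λ ⊆ ℕ be a set of positive multiplicative density. Then (1) there exist distinct x, y ∈ Λ and z ∈ ℕ such that a·x² + b·y² = c·z²; and (2) there exist distinct y, z ∈ Λ and x ∈ ℕ such that a·x² + b·y² = c·z². -/

import Mathlib

open Filter

/-- `Φ` is a multiplicative Følner sequence in `ℕ = {1, 2, …}`: a sequence of finite
nonempty sets of positive integers which is asymptotically invariant under dilation. -/
def IsMulFolner (Φ : ℕ → Finset ℕ) : Prop :=
  (∀ K, (Φ K).Nonempty) ∧ (∀ K, ∀ n ∈ Φ K, 0 < n) ∧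
    ∀ x : ℕ, 0 < x →
      Tendsto (fun K => ((Φ K ∩ (Φ K).image (fun n => x * n)).card : ℝ) / ((Φ K).card : ℝ))
        atTop (nhds 1)

-- The upper multiplicative density of `Λ` with respect to the sequence `Φ`.
open scoped Classical in
noncomputable def upMulDens (Φ : ℕ → Finset ℕ) (Λ : Set ℕ) : ℝ :=
  limsup (fun K => (((Φ K).filter (fun n => n ∈ Λ)).card : ℝ) / ((Φ K).card : ℝ)) atTop

/-!
Along an ultrafilter, `Φ` yields a finitely additive mean on `ℚ`, invariant under dilation by
positive rationals, for which `Λ` has positive measure; `ℚˣ` then acts unitarily on its `L²`, say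
by `ρ`. Writing `v` for the indicator of `Λ` and using the parametrisation
`(t² - 1)² + (2t)² = (t² + 1)²`, it suffices that `⟪ρ (κ t / (t² - ε)) v, v⟫ ≠ 0` for infinitely
many `t`, where `κ` absorbs the coefficients and `ε = ±1` depends on which sides of the triangle
are to lie in `Λ`. For this we show that the average of `ρ (t / (t² - ε)) v` over `t`, with
respect to a suitable affinely invariant mean on `ℚ`, is an invariant vector. It has the same
inner product with the constant function `1` as `v`, so it does not vanish, and being invariant it
also has the same inner product with `v` as with itself.

Write `α ∗ β` for the law of `x - y⁻¹`, with `x` averaged over `α` and `y` over `β`. By affine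
invariance this is also the law of `x - c x / (y + d x)` for any functions `c` and `d`. With
`t = x - x (x + 1) / (y + x + 1)` the ratio `(t + 1) / t` factors as `(x + 1) / x * (y + 1) / y`, so
the averages `A α` of `ρ ((n + 1) / n)` satisfy `A (α ∗ β) = A α ∘ A β`, and averaging the iterates
`l ∗ ⋯ ∗ l` produces a mean `β` for which `A β` is idempotent.

On the range of `A β`, ratios of translates of `n` may be dropped from averages. There
`t = x - (x² - ε) / (y + x)` makes the averages of `ρ (n² / (n² - ε))` multiplicative as well,
hence idempotent at `β`, and expresses the average of `ρ (t / (t² - ε))` over `β ∗ β` as an average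
of `ρ n⁻¹`, which is invariant. On the kernel of `A β` the average of `ρ (t / (t² - ε))` over
`β ∗ β` vanishes, by two applications of Bessel's inequality to correlations that are decoupled by
translating and rescaling `x` and `y`.
-/

open Finset
open scoped BigOperators Topology

variable {ι X Y V : Type*}

section Bounded

variable [SeminormedAddCommGroup V]

/-- A function with bounded norm. Finitely additive means are only meaningful on these, and
`fun_prop` proves all the boundedness side conditions below. -/
@[fun_prop]
def IsBddFun (f : X → V) : Prop := ∃ C, ∀ x, ‖f x‖ ≤ C

namespace IsBddFun

variable {f g : X → V}

@[fun_prop]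
theorem const (c : V) : IsBddFun fun _ : X => c := ⟨‖c‖, fun _ => le_rfl⟩

@[fun_prop]
theorem comp {f : X → V} (hf : IsBddFun f) (g : Y → X) : IsBddFun fun y => f (g y) :=
  let ⟨C, hC⟩ := hf
  ⟨C, fun _ => hC _⟩

theorem exists_nonneg (hf : IsBddFun f) : ∃ C, 0 ≤ C ∧ ∀ x, ‖f x‖ ≤ C :=
  let ⟨C, hC⟩ := hf
  ⟨|C|, abs_nonneg C, fun x => (hC x).trans (le_abs_self C)⟩

@[fun_prop]
theorem add (hf : IsBddFun f) (hg : IsBddFun g) : IsBddFun fun x => f x + g x :=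
  let ⟨C, hC⟩ := hf
  let ⟨D, hD⟩ := hg
  ⟨C + D, fun x => norm_add_le_of_le (hC x) (hD x)⟩

@[fun_prop]
theorem sub (hf : IsBddFun f) (hg : IsBddFun g) : IsBddFun fun x => f x - g x :=
  let ⟨C, hC⟩ := hf
  let ⟨D, hD⟩ := hg
  ⟨C + D, fun x => norm_sub_le_of_le (hC x) (hD x)⟩

@[fun_prop]
theorem sum (s : Finset ι) {f : ι → X → V} (hf : ∀ i, IsBddFun (f i)) :
    IsBddFun fun x => ∑ i ∈ s, f i x := by
  choose C hC using hf
  exact ⟨∑ i ∈ s, C i, fun x => norm_sum_le_of_le s fun i _ => hC i x⟩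

@[fun_prop]
theorem norm (hf : IsBddFun f) : IsBddFun fun x => ‖f x‖ :=
  let ⟨C, hC⟩ := hf
  ⟨C, fun x => by simpa using hC x⟩

@[fun_prop]
theorem inner [InnerProductSpace ℝ V] (hf : IsBddFun f) (hg : IsBddFun g) :
    IsBddFun fun x => inner ℝ (f x) (g x) :=
  let ⟨C, hC0, hC⟩ := hf.exists_nonneg
  let ⟨D, hD⟩ := hg
  ⟨C * D, fun x => (norm_inner_le_norm _ _).trans
    (mul_le_mul (hC x) (hD x) (norm_nonneg _) hC0)⟩

@[fun_prop]
theorem mul {f g : X → ℝ} (hf : IsBddFun f) (hg : IsBddFun g) : IsBddFun fun x => f x * g x :=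
  let ⟨C, hC0, hC⟩ := hf.exists_nonneg
  let ⟨D, hD⟩ := hg
  ⟨C * D, fun x => (norm_mul_le _ _).trans
    (mul_le_mul (hC x) (hD x) (norm_nonneg _) hC0)⟩

@[fun_prop]
theorem pow {f : X → ℝ} (hf : IsBddFun f) (n : ℕ) : IsBddFun fun x => f x ^ n :=
  let ⟨C, hC⟩ := hf
  ⟨C ^ n, fun x => by simpa using pow_le_pow_left₀ (norm_nonneg _) (hC x) n⟩

end IsBddFun

end Bounded

/-- A finitely additive probability mean on `X`, given by its expectation functional `E` on
bounded real functions. The values of `E` on unbounded functions are junk. -/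
structure Mean (X : Type*) where
  E : (X → ℝ) → ℝ
  E_add {f g : X → ℝ} : IsBddFun f → IsBddFun g → E (fun x => f x + g x) = E f + E g
  E_mul_left {f : X → ℝ} (c : ℝ) : IsBddFun f → E (fun x => c * f x) = c * E f
  E_mono {f g : X → ℝ} : IsBddFun f → IsBddFun g → (∀ x, f x ≤ g x) → E f ≤ E g
  E_one : E (fun _ => 1) = 1

namespace Mean

variable (μ : Mean X) {f g : X → ℝ}

theorem E_const (c : ℝ) : μ.E (fun _ => c) = c := by
  simpa [μ.E_one] using μ.E_mul_left (f := fun _ => 1) c (by fun_prop)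

theorem E_sub (hf : IsBddFun f) (hg : IsBddFun g) :
    μ.E (fun x => f x - g x) = μ.E f - μ.E g :=
  eq_sub_of_add_eq (by rw [← μ.E_add (by fun_prop) hg]; simp)

theorem E_sum (s : Finset ι) {f : ι → X → ℝ} (hf : ∀ i, IsBddFun (f i)) :
    μ.E (fun x => ∑ i ∈ s, f i x) = ∑ i ∈ s, μ.E (f i) := by
  classical
  induction s using Finset.induction_on with
  | empty => simp [E_const]
  | insert i s hi ih => simp_rw [sum_insert hi, μ.E_add (hf i) (IsBddFun.sum s hf), ih]

theorem E_le_const {c : ℝ} (hf : IsBddFun f) (h : ∀ x, f x ≤ c) : μ.E f ≤ c :=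
  (μ.E_mono hf (by fun_prop) h).trans_eq (μ.E_const c)

theorem const_le_E {c : ℝ} (hf : IsBddFun f) (h : ∀ x, c ≤ f x) : c ≤ μ.E f :=
  (μ.E_const c).symm.trans_le (μ.E_mono (by fun_prop) hf h)

theorem abs_E_le_E (hg : IsBddFun g) (h : ∀ x, |f x| ≤ g x) : |μ.E f| ≤ μ.E g := by
  obtain ⟨C, hC⟩ := id hg
  have hf : IsBddFun f := ⟨C, fun x => (h x).trans ((le_abs_self _).trans (hC x))⟩
  refine abs_le.2 ⟨?_, μ.E_mono hf hg fun x => (abs_le.1 (h x)).2⟩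
  rw [← neg_one_mul, ← μ.E_mul_left _ hg]
  exact μ.E_mono (by fun_prop) hf fun x => by linarith [(abs_le.1 (h x)).1]

theorem abs_E_le {c : ℝ} (h : ∀ x, |f x| ≤ c) : |μ.E f| ≤ c :=
  (μ.abs_E_le_E (by fun_prop) h).trans_eq (μ.E_const c)

theorem sq_E_le (hf : IsBddFun f) : μ.E f ^ 2 ≤ μ.E fun x => f x ^ 2 := by
  have hvar : 0 ≤ μ.E fun x => (f x - μ.E f) ^ 2 :=
    μ.const_le_E (by fun_prop) fun x => sq_nonneg _
  have hexp : (fun x => (f x - μ.E f) ^ 2) =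
      fun x => f x ^ 2 - 2 * μ.E f * f x + μ.E f ^ 2 := by ext; ring
  rw [hexp, μ.E_add (by fun_prop) (by fun_prop), μ.E_sub (by fun_prop) (by fun_prop),
    μ.E_mul_left _ hf, E_const] at hvar
  linarith

omit μ in
@[fun_prop]
theorem isBddFun_E {κ : Y → Mean X} {F : Y → X → ℝ} (hF : IsBddFun fun p : Y × X => F p.1 p.2) :
    IsBddFun fun y => (κ y).E (F y) :=
  let ⟨C, hC⟩ := hF
  ⟨C, fun y => (κ y).abs_E_le fun x => hC (y, x)⟩

omit μ in
@[fun_prop]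
theorem isBddFun_E_fun {κ : Y → Mean X} {F : Y → X → ℝ}
    (hF : IsBddFun fun p : Y × X => F p.1 p.2) : IsBddFun fun y => (κ y).E fun x => F y x :=
  isBddFun_E hF

section Constructions

/-- The mixture of the means `κ x`, with `x` distributed according to `μ`. -/
def bind (μ : Mean X) (κ : X → Mean Y) : Mean Y where
  E f := μ.E fun x => (κ x).E f
  E_add hf hg := by
    simp_rw [(κ _).E_add hf hg]
    exact μ.E_add (by fun_prop) (by fun_prop)
  E_mul_left c hf := by
    simp_rw [(κ _).E_mul_left c hf]
    exact μ.E_mul_left c (by fun_prop)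
  E_mono hf hg h := μ.E_mono (by fun_prop) (by fun_prop) fun x => (κ x).E_mono hf hg h
  E_one := by simp_rw [E_one]

/-- The law of `g x`, with `x` distributed according to `μ`. -/
def map (μ : Mean X) (g : X → Y) : Mean Y where
  E f := μ.E fun x => f (g x)
  E_add hf hg := μ.E_add (by fun_prop) (by fun_prop)
  E_mul_left c hf := μ.E_mul_left c (by fun_prop)
  E_mono hf hg h := μ.E_mono (by fun_prop) (by fun_prop) fun x => h (g x)
  E_one := μ.E_one

/-- The iterated mean on the product: the second coordinate is averaged first. -/
def prod (μ : Mean X) (ν : Mean Y) : Mean (X × Y) := μ.bind fun x => ν.map (Prod.mk x)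

/-- The uniform mean on a nonempty finite set. -/
noncomputable def uniform (s : Finset X) (hs : s.Nonempty) : Mean X where
  E f := 𝔼 x ∈ s, f x
  E_add _ _ := expect_add_distrib s _ _
  E_mul_left c _ := (mul_expect s _ c).symm
  E_mono _ _ h := expect_le_expect fun x _ => h x
  E_one := expect_const hs 1

theorem tendsto_limUnder (U : Ultrafilter ι) {f : ι → ℝ} (hf : IsBddFun f) :
    Tendsto f U (𝓝 (limUnder U f)) := by
  obtain ⟨C, hC⟩ := hf
  obtain ⟨c, -, hc⟩ := (isCompact_Icc (a := -C) (b := C)).ultrafilter_le_nhds' (U.map f)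
    (Eventually.of_forall fun i => abs_le.1 (hC i) : ∀ᶠ i in U, f i ∈ Set.Icc (-C) C)
  exact tendsto_nhds_limUnder ⟨c, hc⟩

/-- The limit along an ultrafilter. -/
noncomputable def ofUltrafilter (U : Ultrafilter ι) : Mean ι where
  E f := limUnder U f
  E_add hf hg := ((tendsto_limUnder U hf).add (tendsto_limUnder U hg)).limUnder_eq
  E_mul_left c hf := ((tendsto_limUnder U hf).const_mul c).limUnder_eq
  E_mono hf hg h := le_of_tendsto_of_tendsto' (tendsto_limUnder U hf) (tendsto_limUnder U hg) h
  E_one := tendsto_const_nhds.limUnder_eq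

theorem ofUltrafilter_E_eq {U : Ultrafilter ι} {f : ι → ℝ} {c : ℝ} (h : Tendsto f U (𝓝 c)) :
    (ofUltrafilter U).E f = c :=
  h.limUnder_eq

theorem le_ofUltrafilter_E {U : Ultrafilter ι} {f : ι → ℝ} (hf : IsBddFun f) {c : ℝ}
    (h : ∀ᶠ i in (U : Filter ι), c ≤ f i) : c ≤ (ofUltrafilter U).E f :=
  ge_of_tendsto (tendsto_limUnder U hf) h

end Constructions

section Folner

theorem abs_expect_image_sub_le [DecidableEq X] {s : Finset X} (hs : s.Nonempty) {g : X → X}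
    (hg : g.Injective) {C : ℝ} (hC : ∀ x, |f x| ≤ C) :
    |𝔼 x ∈ s, f (g x) - 𝔼 x ∈ s, f x| ≤ 2 * C * (1 - (#(s ∩ s.image g) : ℝ) / #s) := by
  have hcard : (0 : ℝ) < #s := by exact_mod_cast hs.card_pos
  have hsum_le (t : Finset X) : |∑ x ∈ t, f x| ≤ C * #t :=
    (abs_sum_le_sum_abs _ _).trans <| (sum_le_card_nsmul t _ C fun x _ => hC x).trans_eq <| by
      rw [nsmul_eq_mul, mul_comm]
  have hdiff : |∑ x ∈ s, f (g x) - ∑ x ∈ s, f x| ≤ 2 * C * (#s - #(s ∩ s.image g)) := by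
    have h₁ : (#(s.image g \ s) : ℝ) + #(s ∩ s.image g) = #s := by
      rw [inter_comm, ← card_image_of_injective s hg]
      exact_mod_cast card_sdiff_add_card_inter _ _
    have h₂ : (#(s \ s.image g) : ℝ) + #(s ∩ s.image g) = #s := by
      exact_mod_cast card_sdiff_add_card_inter _ _
    rw [← sum_image hg.injOn, ← sum_sdiff_sub_sum_sdiff]
    calc |∑ x ∈ s.image g \ s, f x - ∑ x ∈ s \ s.image g, f x|
        ≤ C * #(s.image g \ s) + C * #(s \ s.image g) :=
          (abs_sub _ _).trans (add_le_add (hsum_le _) (hsum_le _))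
      _ = 2 * C * (#s - #(s ∩ s.image g)) := by
          rw [eq_sub_of_add_eq h₁, eq_sub_of_add_eq h₂]; ring
  rw [expect_eq_sum_div_card, expect_eq_sum_div_card, ← sub_div, abs_div, abs_of_pos hcard,
    div_le_iff₀ hcard]
  exact hdiff.trans_eq (by field_simp)

/-- The limit along `U` of the uniform means on the sets `F i`. -/
noncomputable def limUniform (U : Ultrafilter ι) (F : ι → Finset X) (hF : ∀ i, (F i).Nonempty) :
    Mean X :=
  (ofUltrafilter U).bind fun i => uniform (F i) (hF i)

theorem limUniform_E_congr {U : Ultrafilter ι} {F : ι → Finset X} (hF : ∀ i, (F i).Nonempty)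
    (h : ∀ i, ∀ x ∈ F i, f x = g x) : (limUniform U F hF).E f = (limUniform U F hF).E g :=
  congrArg (ofUltrafilter U).E (funext fun i => expect_congr rfl (h i))

theorem le_limUniform_E {U : Ultrafilter ι} {F : ι → Finset X} (hF : ∀ i, (F i).Nonempty)
    (hf : IsBddFun f) {c : ℝ} (h : ∀ᶠ i in (U : Filter ι), c ≤ 𝔼 x ∈ F i, f x) :
    c ≤ (limUniform U F hF).E f :=
  le_ofUltrafilter_E (isBddFun_E (κ := fun i => uniform (F i) (hF i)) (hf.comp Prod.snd)) h

theorem limUniform_E_comp [DecidableEq X] {U : Ultrafilter ι} {F : ι → Finset X}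
    (hF : ∀ i, (F i).Nonempty) {g : X → X} (hg : g.Injective)
    (h : Tendsto (fun i => (#(F i ∩ (F i).image g) : ℝ) / #(F i)) U (𝓝 1)) (hf : IsBddFun f) :
    (limUniform U F hF).E (fun x => f (g x)) = (limUniform U F hF).E f := by
  obtain ⟨C, hC⟩ := id hf
  have hlim : Tendsto (fun i => 2 * C * (1 - (#(F i ∩ (F i).image g) : ℝ) / #(F i))) U (𝓝 0) := by
    simpa using (h.const_sub 1).const_mul (2 * C)
  refine sub_eq_zero.1 ((E_sub _ (by fun_prop) hf).symm.trans ?_)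
  refine ofUltrafilter_E_eq (squeeze_zero_norm (fun i => ?_) hlim)
  exact ((congrArg _ (E_sub _ (by fun_prop) hf)).trans_le (abs_expect_image_sub_le (hF i) hg hC))

end Folner

end Mean

section Bessel

variable {H : Type*} [NormedAddCommGroup H] [InnerProductSpace ℝ H]

namespace Mean

variable (μ : Mean X) {F : ι → X → H}

theorem E_norm_sq_sum (hF : ∀ i, IsBddFun (F i)) (s : Finset ι) :
    μ.E (fun x => ‖∑ i ∈ s, F i x‖ ^ 2) =
      ∑ i ∈ s, ∑ j ∈ s, μ.E fun x => inner ℝ (F i x) (F j x) := by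
  simp_rw [← real_inner_self_eq_norm_sq, sum_inner, inner_sum]
  rw [μ.E_sum s fun i => by fun_prop]
  exact sum_congr rfl fun i _ => μ.E_sum s fun j => by fun_prop

theorem E_norm_sq_sum_le {C : ℝ} (hC : ∀ i x, ‖F i x‖ ≤ C)
    (horth : Pairwise fun i j => μ.E (fun x => inner ℝ (F i x) (F j x)) ≤ 0) (s : Finset ι) :
    μ.E (fun x => ‖∑ i ∈ s, F i x‖ ^ 2) ≤ C ^ 2 * #s := by
  classical
  have hF i : IsBddFun (F i) := ⟨C, hC i⟩
  have hle i j : μ.E (fun x => inner ℝ (F i x) (F j x)) ≤ if i = j then C ^ 2 else 0 := by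
    split_ifs with h
    · subst h
      refine μ.E_le_const (by fun_prop) fun x => ?_
      rw [real_inner_self_eq_norm_sq]
      exact pow_le_pow_left₀ (norm_nonneg _) (hC i x) 2
    · exact horth h
  calc μ.E (fun x => ‖∑ i ∈ s, F i x‖ ^ 2)
      ≤ ∑ i ∈ s, ∑ j ∈ s, if i = j then C ^ 2 else 0 :=
        (μ.E_norm_sq_sum hF s).trans_le (sum_le_sum fun i _ => sum_le_sum fun j _ => hle i j)
    _ = C ^ 2 * #s := by simp [mul_comm]

theorem sq_E_inner_sum_le {G : X → H} {D : ℝ} (hG : ∀ x, ‖G x‖ ≤ D)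
    (hF : ∀ i, IsBddFun (F i)) (s : Finset ι) :
    (∑ i ∈ s, μ.E fun x => inner ℝ (F i x) (G x)) ^ 2 ≤
      D ^ 2 * μ.E fun x => ‖∑ i ∈ s, F i x‖ ^ 2 := by
  have hGb : IsBddFun G := ⟨D, hG⟩
  rw [← μ.E_sum s fun i => by fun_prop, ← μ.E_mul_left _ (by fun_prop)]
  refine (μ.sq_E_le (by fun_prop)).trans (μ.E_mono (by fun_prop) (by fun_prop) fun x => ?_)
  rw [← sum_inner, ← mul_pow, mul_comm]
  refine sq_le_sq' (neg_le_of_abs_le ?_) (le_of_abs_le ?_) <;>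
    exact (abs_real_inner_le_norm _ _).trans
      (mul_le_mul_of_nonneg_left (hG x) (norm_nonneg _))

theorem eventually_E_inner_lt {G : X → H} (hG : IsBddFun G) (hF : ∀ i, IsBddFun (F i)) {C : ℝ}
    (hC : ∀ s : Finset ι, μ.E (fun x => ‖∑ i ∈ s, F i x‖ ^ 2) ≤ C * #s) {a : ℝ} (ha : 0 < a) :
    ∀ᶠ i in cofinite, μ.E (fun x => inner ℝ (F i x) (G x)) < a := by
  by_contra hfreq
  have hinf : {i | a ≤ μ.E fun x => inner ℝ (F i x) (G x)}.Infinite := by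
    simpa [Filter.Eventually, mem_cofinite, Set.compl_def] using hfreq
  obtain ⟨D, hD⟩ := hG
  obtain ⟨n, hn⟩ := exists_nat_gt (D ^ 2 * C / a ^ 2)
  obtain ⟨s, hs, hcard⟩ := hinf.exists_subset_card_eq (n + 1)
  have hlow : (n + 1) * a ≤ ∑ i ∈ s, μ.E fun x => inner ℝ (F i x) (G x) := by
    simpa [hcard] using card_nsmul_le_sum s _ a fun i hi => hs hi
  have hsq : (n + 1) * ((n + 1) * a ^ 2) ≤ (n + 1) * (D ^ 2 * C) := by
    calc (n + 1) * ((n + 1) * a ^ 2) = ((n + 1) * a) ^ 2 := by ring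
      _ ≤ (∑ i ∈ s, μ.E fun x => inner ℝ (F i x) (G x)) ^ 2 := by gcongr
      _ ≤ D ^ 2 * (C * #s) := (μ.sq_E_inner_sum_le hD hF s).trans
          (mul_le_mul_of_nonneg_left (hC s) (sq_nonneg D))
      _ = (n + 1) * (D ^ 2 * C) := by rw [hcard]; push_cast; ring
  rw [div_lt_iff₀ (by positivity)] at hn
  have := le_of_mul_le_mul_left hsq (by positivity)
  nlinarith [sq_pos_of_pos ha]

theorem eq_zero_of_pairwise_E_inner_nonpos {g : H} {C : ℝ} (hC : ∀ i x, ‖F i x‖ ≤ C)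
    (horth : Pairwise fun i j => μ.E (fun x => inner ℝ (F i x) (F j x)) ≤ 0)
    (hg : ∃ᶠ i in cofinite, μ.E (fun x => inner ℝ (F i x) g) = ‖g‖ ^ 2) : g = 0 := by
  by_contra hne
  obtain ⟨i, hlt, heq⟩ := ((μ.eventually_E_inner_lt (.const g) (fun i => ⟨C, hC i⟩)
    (μ.E_norm_sq_sum_le hC horth) (a := ‖g‖ ^ 2) (by positivity)).and_frequently hg).exists
  exact hlt.ne heq

end Mean

end Bessel

section Affine

variable {K : Type*} [Field K]

namespace Mean

/-- Invariance of a mean on a field under all affine bijections. -/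
def IsAffine (α : Mean K) : Prop :=
  ∀ ⦃a : K⦄, a ≠ 0 → ∀ (b : K) ⦃f : K → ℝ⦄, IsBddFun f → α.E (fun x => f (a * x + b)) = α.E f

/-- The law of `x - y⁻¹`, where first `y` is averaged over `β` and then `x` over `α`. -/
def subInv (α β : Mean K) : Mean K := α.bind fun x => β.map fun y => x - y⁻¹

namespace IsAffine

variable {α β : Mean K} {f g : K → ℝ}

theorem E_mul_left (hα : α.IsAffine) {a : K} (ha : a ≠ 0) (hf : IsBddFun f) :
    α.E (fun x => f (a * x)) = α.E f := by
  simpa using hα ha 0 hf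

theorem E_add_right (hα : α.IsAffine) (b : K) (hf : IsBddFun f) :
    α.E (fun x => f (x + b)) = α.E f := by
  simpa using hα one_ne_zero b hf

theorem of_mul_of_add_one (hmul : ∀ a ≠ 0, ∀ f, IsBddFun f → α.E (fun x => f (a * x)) = α.E f)
    (hadd : ∀ f, IsBddFun f → α.E (fun x => f (x + 1)) = α.E f) : α.IsAffine := by
  intro a ha b f hf
  obtain rfl | hb := eq_or_ne b 0
  · simpa using hmul a ha f hf
  · calc α.E (fun x => f (a * x + b)) = α.E (fun x => f (b * (b⁻¹ * a * x + 1))) := by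
          simp_rw [mul_add, mul_one, mul_assoc, mul_inv_cancel_left₀ hb]
      _ = α.E (fun x => f (b * (x + 1))) :=
          hmul (b⁻¹ * a) (mul_ne_zero (inv_ne_zero hb) ha) _
            (hf.comp fun x => b * (x + 1))
      _ = α.E f := (hadd _ (hf.comp _)).trans (hmul b hb f hf)

theorem bind {κ : X → Mean K} (hκ : ∀ x, (κ x).IsAffine) (μ : Mean X) : (μ.bind κ).IsAffine :=
  fun _ ha b _ hf => congrArg μ.E (funext fun x => hκ x ha b hf)

theorem subInv (hα : α.IsAffine) (hβ : β.IsAffine) : (α.subInv β).IsAffine := by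
  intro a ha b f hf
  calc (α.subInv β).E (fun t => f (a * t + b))
      = α.E fun x => β.E fun y => f (a * x + b - (a⁻¹ * y)⁻¹) := by
        refine congrArg α.E (funext fun x => congrArg β.E (funext fun y => congrArg f ?_))
        rw [mul_inv, inv_inv]
        ring
    _ = α.E fun x => β.E fun y => f (a * x + b - y⁻¹) :=
        congrArg α.E <| funext fun x => hβ.E_mul_left (inv_ne_zero ha)
          (f := fun y => f (a * x + b - y⁻¹)) (by fun_prop)
    _ = (α.subInv β).E f :=
        hα ha b (f := fun x => β.E fun y => f (x - y⁻¹)) (by fun_prop)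

section Infinite

variable [Infinite K]

omit [Field K] [Infinite K] in
theorem isBddFun_single [DecidableEq K] (a : K) : IsBddFun (Pi.single a (1 : ℝ)) :=
  ⟨1, fun x => by by_cases h : x = a <;> simp [h]⟩

theorem E_single [DecidableEq K] (hα : α.IsAffine) (a : K) : α.E (Pi.single a 1) = 0 := by
  have hconst (b : K) : α.E (Pi.single b 1) = α.E (Pi.single a 1) := by
    rw [← hα.E_add_right (a - b) (isBddFun_single a)]
    congr 1 with x
    simp [Pi.single_apply, ← eq_sub_iff_add_eq]
  have horth : Pairwise fun b c : K =>
      α.E (fun x => inner ℝ ((Pi.single b 1 : K → ℝ) x) ((Pi.single c 1 : K → ℝ) x)) ≤ 0 := by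
    intro b c hbc
    refine α.E_le_const ((isBddFun_single b).inner (isBddFun_single c)) fun x => ?_
    by_cases hb : x = b <;> simp [hb, hbc]
  refine le_antisymm (le_of_forall_pos_le_add fun ε hε => ?_)
    (α.const_le_E (isBddFun_single a) fun x => by by_cases h : x = a <;> simp [h])
  obtain ⟨b, hb⟩ := (α.eventually_E_inner_lt (.const (1 : ℝ)) isBddFun_single
    (α.E_norm_sq_sum_le (C := 1) (fun b x => by by_cases h : x = b <;> simp [h]) horth) hε).exists
  rw [← hconst b, zero_add]
  simpa using hb.le

theorem E_eq_zero_of_tendsto (hα : α.IsAffine) (hf : IsBddFun f)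
    (h : Tendsto f cofinite (𝓝 0)) : α.E f = 0 := by
  classical
  refine abs_nonpos_iff.1 (le_of_forall_pos_le_add fun ε hε => ?_)
  obtain ⟨C, hC⟩ := id hf
  have hfin : {x | ¬|f x| < ε}.Finite := by
    simpa only [dist_zero_right, Real.norm_eq_abs] using
      eventually_cofinite.1 (Metric.tendsto_nhds.1 h ε hε)
  set s := hfin.toFinset
  have hbdd : IsBddFun fun x => ∑ a ∈ s, (Pi.single a 1 : K → ℝ) x := .sum _ isBddFun_single
  have hle x : |f x| ≤ ε + C * ∑ a ∈ s, (Pi.single a 1 : K → ℝ) x := by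
    by_cases hx : |f x| < ε
    · simpa [s, Pi.single_apply, hx, not_le.2 hx] using hx.le
    · have hCx : |f x| ≤ C := hC x
      simp only [s, sum_pi_single, hfin.mem_toFinset.2 hx, if_true]
      linarith
  refine (α.abs_E_le_E (by fun_prop) hle).trans_eq ?_
  rw [α.E_add (by fun_prop) (by fun_prop), α.E_mul_left _ hbdd, α.E_sum _ isBddFun_single,
    E_const, sum_eq_zero fun a _ => hα.E_single a]
  ring

theorem E_congr (hα : α.IsAffine) (hf : IsBddFun f) (hg : IsBddFun g) (h : f =ᶠ[cofinite] g) :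
    α.E f = α.E g := by
  refine sub_eq_zero.1 ((α.E_sub hf hg).symm.trans (hα.E_eq_zero_of_tendsto (hf.sub hg) ?_))
  exact tendsto_const_nhds.congr' (h.mono fun x hx => by simp [hx])

theorem subInv_E (hα : α.IsAffine) (hβ : β.IsAffine) {c : K → K} (d : K → K)
    (hc : ∀ᶠ x in cofinite, c x ≠ 0) (hf : IsBddFun f) :
    (α.subInv β).E f = α.E fun x => β.E fun y => f (x - c x / (y + d x)) := by
  refine hα.E_congr (f := fun x => β.E fun y => f (x - y⁻¹)) (by fun_prop) (by fun_prop) ?_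
  filter_upwards [hc] with x hx
  rw [← hβ (inv_ne_zero hx) ((c x)⁻¹ * d x) (f := fun y => f (x - y⁻¹)) (by fun_prop)]
  refine congrArg β.E (funext fun y => congrArg f ?_)
  rw [← mul_add, mul_inv, inv_inv, div_eq_mul_inv]

end Infinite

section Decoupling

variable {H : Type*} [NormedAddCommGroup H] [InnerProductSpace ℝ H] [AddAction K Y]

theorem E_inner_vadd_eq (hα : α.IsAffine) {μ : Mean Y}
    (hμ : ∀ (b : K) (f : Y → ℝ), IsBddFun f → μ.E (fun y => f (b +ᵥ y)) = μ.E f)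
    {F G : Y → H} (hF : IsBddFun F) (hG : IsBddFun G) {a b : K} (hab : a ≠ b) :
    (α.prod μ).E (fun p => inner ℝ (F ((a * p.1) +ᵥ p.2)) (G ((b * p.1) +ᵥ p.2))) =
      (α.prod μ).E fun p => inner ℝ (F (p.1 +ᵥ p.2)) (G p.2) := by
  calc α.E (fun z => μ.E fun y => inner ℝ (F ((a * z) +ᵥ y)) (G ((b * z) +ᵥ y)))
      = α.E fun z => μ.E fun y => inner ℝ (F (((a - b) * z) +ᵥ y)) (G y) := by
        congr 1 with z
        rw [← hμ (b * z) (fun y => inner ℝ (F (((a - b) * z) +ᵥ y)) (G y)) (by fun_prop)]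
        simp_rw [vadd_vadd, sub_mul, sub_add_cancel]
    _ = α.E fun z => μ.E fun y => inner ℝ (F (z +ᵥ y)) (G y) :=
        hα.E_mul_left (sub_ne_zero.2 hab)
          (f := fun z => μ.E fun y => inner ℝ (F (z +ᵥ y)) (G y)) (by fun_prop)

theorem E_inner_vadd_le {α : Mean K} {μ : Mean Y}
    (hμ : ∀ (b : K) (f : Y → ℝ), IsBddFun f → μ.E (fun y => f (b +ᵥ y)) = μ.E f)
    {S : Y → H} (hS : IsBddFun S) :
    (α.prod μ).E (fun p => inner ℝ (S (p.1 +ᵥ p.2)) (S p.2)) ≤ μ.E fun y => ‖S y‖ ^ 2 := by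
  refine α.E_le_const (f := fun z => μ.E fun y => inner ℝ (S (z +ᵥ y)) (S y)) (by fun_prop)
    fun z => ?_
  have hle y : inner ℝ (S (z +ᵥ y)) (S y) ≤
      2⁻¹ * ‖S (z +ᵥ y)‖ ^ 2 + 2⁻¹ * ‖S y‖ ^ 2 := by
    nlinarith [real_inner_le_norm (S (z +ᵥ y)) (S y), sq_nonneg (‖S (z +ᵥ y)‖ - ‖S y‖)]
  refine (μ.E_mono (by fun_prop) (by fun_prop) hle).trans_eq ?_
  rw [μ.E_add (by fun_prop) (by fun_prop), μ.E_mul_left _ (by fun_prop),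
    μ.E_mul_left _ (by fun_prop), hμ z (fun y => ‖S y‖ ^ 2) (by fun_prop)]
  ring

/-- Translating the `F x` by distinct multiples of an independent affine variable makes their
off-diagonal correlations those of `F x (z + y)` and `F x' y`, hence square root cancellation
of `∑ F x` survives the translation. -/
theorem E_norm_sq_sum_vadd_le (hα : α.IsAffine) {μ : Mean Y}
    (hμ : ∀ (b : K) (f : Y → ℝ), IsBddFun f → μ.E (fun y => f (b +ᵥ y)) = μ.E f)
    {F : K → Y → H} {C : ℝ} (hC : ∀ x y, ‖F x y‖ ≤ C) (s : Finset K) :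
    (α.prod μ).E (fun p => ‖∑ x ∈ s, F x ((x * p.1) +ᵥ p.2)‖ ^ 2) ≤
      μ.E (fun y => ‖∑ x ∈ s, F x y‖ ^ 2) + 2 * C ^ 2 * #s := by
  classical
  have hF x : IsBddFun (F x) := ⟨C, hC x⟩
  have hinner x y y' : |inner ℝ (F x y) (F x y')| ≤ C ^ 2 :=
    (abs_real_inner_le_norm _ _).trans <| (sq C).symm ▸
      mul_le_mul (hC _ _) (hC _ _) (norm_nonneg _) ((norm_nonneg _).trans (hC x y))
  have hle x x' :
      (α.prod μ).E (fun p => inner ℝ (F x ((x * p.1) +ᵥ p.2)) (F x' ((x' * p.1) +ᵥ p.2))) ≤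
        (α.prod μ).E (fun p => inner ℝ (F x (p.1 +ᵥ p.2)) (F x' p.2)) +
          if x = x' then 2 * C ^ 2 else 0 := by
    split_ifs with h
    · subst h
      linarith [(abs_le.1 ((α.prod μ).abs_E_le fun p =>
          hinner x ((x * p.1) +ᵥ p.2) ((x * p.1) +ᵥ p.2))).2,
        (abs_le.1 ((α.prod μ).abs_E_le fun p => hinner x (p.1 +ᵥ p.2) p.2)).1]
    · rw [add_zero, hα.E_inner_vadd_eq hμ (hF x) (hF x') h]
  have hsum : ∑ x ∈ s, ∑ x' ∈ s, (α.prod μ).E (fun p => inner ℝ (F x (p.1 +ᵥ p.2)) (F x' p.2)) =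
      (α.prod μ).E fun p => inner ℝ (∑ x ∈ s, F x (p.1 +ᵥ p.2)) (∑ x ∈ s, F x p.2) := by
    simp_rw [sum_inner, inner_sum]
    rw [E_sum _ s fun i => by fun_prop]
    exact sum_congr rfl fun i _ => (E_sum _ s fun j => by fun_prop).symm
  calc (α.prod μ).E (fun p => ‖∑ x ∈ s, F x ((x * p.1) +ᵥ p.2)‖ ^ 2)
      ≤ ∑ x ∈ s, ∑ x' ∈ s, ((α.prod μ).E (fun p => inner ℝ (F x (p.1 +ᵥ p.2)) (F x' p.2)) +
          if x = x' then 2 * C ^ 2 else 0) :=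
        (E_norm_sq_sum _ (fun x => (hF x).comp _) s).trans_le
          (sum_le_sum fun x _ => sum_le_sum fun x' _ => hle x x')
    _ = (α.prod μ).E (fun p => inner ℝ (∑ x ∈ s, F x (p.1 +ᵥ p.2)) (∑ x ∈ s, F x p.2)) +
          2 * C ^ 2 * #s := by
        simp_rw [sum_add_distrib, hsum]
        simp [mul_comm]
    _ ≤ _ := add_le_add_left (E_inner_vadd_le hμ (S := fun y => ∑ x ∈ s, F x y) (by fun_prop)) _

end Decoupling

end IsAffine

end Mean

end Affine

section UnitaryRep

variable {K H : Type*}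

/-- An orthogonal representation on `H` of the multiplicative group of `K`, extended by
`0 ↦ 0` so that quotients with vanishing denominator need no special treatment. -/
structure UnitaryRep (K H : Type*) [CommGroupWithZero K] [SeminormedAddCommGroup H]
    [InnerProductSpace ℝ H] extends K →*₀ (H →L[ℝ] H) where
  inner_toFun (x : K) (v w : H) : inner ℝ (toFun x v) w = inner ℝ v (toFun x⁻¹ w)

namespace UnitaryRep

section Basic

variable [CommGroupWithZero K] [SeminormedAddCommGroup H] [InnerProductSpace ℝ H]

instance : CoeFun (UnitaryRep K H) fun _ => K → H →L[ℝ] H := ⟨fun ρ => ρ.toMonoidWithZeroHom⟩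

variable (ρ : UnitaryRep K H)

theorem apply_mul (a b : K) (v : H) : ρ (a * b) v = ρ a (ρ b v) :=
  congr($(map_mul ρ.toMonoidWithZeroHom a b) v)

theorem apply_one (v : H) : ρ 1 v = v :=
  congr($(map_one ρ.toMonoidWithZeroHom) v)

theorem inner_apply_left (a : K) (v w : H) : inner ℝ (ρ a v) w = inner ℝ v (ρ a⁻¹ w) :=
  ρ.inner_toFun a v w

theorem inner_apply_apply (a b : K) (v w : H) :
    inner ℝ (ρ a v) (ρ b w) = inner ℝ (ρ (a / b) v) w := by
  rw [real_inner_comm, inner_apply_left, ← apply_mul, real_inner_comm, div_eq_inv_mul]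

theorem norm_apply_le (a : K) (v : H) : ‖ρ a v‖ ≤ ‖v‖ := by
  obtain rfl | ha := eq_or_ne a 0
  · simp
  · refine (sq_le_sq₀ (norm_nonneg _) (norm_nonneg _)).1 (le_of_eq ?_)
    rw [← real_inner_self_eq_norm_sq, inner_apply_apply, div_self ha, apply_one,
      real_inner_self_eq_norm_sq]

@[fun_prop]
theorem isBddFun_apply (r : X → K) (v : H) : IsBddFun fun x => ρ (r x) v :=
  ⟨‖v‖, fun _ => ρ.norm_apply_le _ v⟩

/-- The vectors fixed by the whole multiplicative group. -/
def IsInvariant (v : H) : Prop := ∀ a ≠ 0, ρ a v = v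

end Basic

section Average

variable [CommGroupWithZero K] [NormedAddCommGroup H] [InnerProductSpace ℝ H] [CompleteSpace H]
  (ρ : UnitaryRep K H) (μ : Mean X) (r : X → K)

/-- The weak integral of `ρ (r x)` with respect to the mean `μ`. -/
noncomputable def average : H →L[ℝ] H :=
  InnerProductSpace.continuousLinearMapOfBilin <| LinearMap.mkContinuous₂
    (LinearMap.mk₂'ₛₗ (starRingEnd ℝ) (RingHom.id ℝ)
      (fun v w => μ.E fun x => inner ℝ (ρ (r x) v) w)
      (fun v v' w => by
        simp_rw [map_add, inner_add_left]
        exact μ.E_add (by fun_prop) (by fun_prop))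
      (fun c v w => by
        simp_rw [map_smul, inner_smul_left]
        exact μ.E_mul_left _ (by fun_prop))
      (fun v w w' => by
        simp_rw [inner_add_right]
        exact μ.E_add (by fun_prop) (by fun_prop))
      (fun c v w => by
        simp_rw [inner_smul_right]
        exact μ.E_mul_left _ (by fun_prop)))
    1 fun v w => by
      rw [one_mul]
      exact μ.abs_E_le fun x => (abs_real_inner_le_norm _ _).trans
        (mul_le_mul_of_nonneg_right (ρ.norm_apply_le _ v) (norm_nonneg w))

theorem inner_average (v w : H) :
    inner ℝ (ρ.average μ r v) w = μ.E fun x => inner ℝ (ρ (r x) v) w :=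
  InnerProductSpace.continuousLinearMapOfBilin_apply _ v w

theorem norm_average_le (v : H) : ‖ρ.average μ r v‖ ≤ ‖v‖ := by
  have h := μ.abs_E_le fun x => (abs_real_inner_le_norm (ρ (r x) v) (ρ.average μ r v)).trans
    (mul_le_mul_of_nonneg_right (ρ.norm_apply_le _ v) (norm_nonneg _))
  rw [← inner_average, real_inner_self_eq_norm_mul_norm, abs_mul_self] at h
  obtain h0 | hpos := (norm_nonneg (ρ.average μ r v)).eq_or_lt
  · exact h0 ▸ norm_nonneg v
  · exact le_of_mul_le_mul_right h hpos

@[fun_prop]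
theorem isBddFun_average (μ : Y → Mean X) (r : Y → X → K) (v : H) :
    IsBddFun fun y => ρ.average (μ y) (r y) v :=
  ⟨‖v‖, fun _ => ρ.norm_average_le _ _ v⟩

theorem average_eq_of_law_eq {ν : Mean Y} {s : Y → K}
    (h : ∀ f : K → ℝ, IsBddFun f → μ.E (fun x => f (r x)) = ν.E fun y => f (s y)) :
    ρ.average μ r = ρ.average ν s :=
  ContinuousLinearMap.ext fun v => ext_inner_right ℝ fun w => by
    rw [inner_average, inner_average]
    exact h (fun a => inner ℝ (ρ a v) w) (by fun_prop)

theorem apply_average (a : K) (v : H) :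
    ρ a (ρ.average μ r v) = ρ.average μ (fun x => a * r x) v :=
  ext_inner_right ℝ fun w => by
    simp_rw [inner_apply_left, inner_average, inner_apply_apply, div_inv_eq_mul, mul_comm]

theorem average_apply (a : K) (v : H) :
    ρ.average μ r (ρ a v) = ρ.average μ (fun x => a * r x) v :=
  ext_inner_right ℝ fun w => by
    simp_rw [inner_average, ← apply_mul, mul_comm]

theorem average_average_comm {ν : Mean Y} {s : Y → K} (v : H) :
    ρ.average μ r (ρ.average ν s v) = ρ.average ν s (ρ.average μ r v) :=
  ext_inner_right ℝ fun w => by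
    rw [← ContinuousLinearMap.adjoint_inner_right, inner_average, inner_average]
    simp_rw [ContinuousLinearMap.adjoint_inner_right, apply_average, average_apply]

theorem norm_sq_average (v : H) : ‖ρ.average μ r v‖ ^ 2 =
    (μ.prod μ).E fun p => inner ℝ (ρ (r p.1 / r p.2) v) v := by
  rw [← real_inner_self_eq_norm_sq, inner_average]
  refine congrArg μ.E (funext fun x => ?_)
  rw [real_inner_comm, inner_average]
  refine congrArg μ.E (funext fun y => ?_)
  rw [real_inner_comm, inner_apply_apply]

variable {μ r}

theorem E_norm_sq_sub_of_average_eq {v : H} (h : ρ.average μ r v = v) :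
    μ.E (fun x => ‖ρ (r x) v - v‖ ^ 2) = 0 := by
  refine le_antisymm ?_ (μ.const_le_E (by fun_prop) fun _ => sq_nonneg _)
  have hle x : ‖ρ (r x) v - v‖ ^ 2 ≤ 2 * ‖v‖ ^ 2 - 2 * inner ℝ (ρ (r x) v) v := by
    rw [norm_sub_sq_real]
    linarith [pow_le_pow_left₀ (norm_nonneg _) (ρ.norm_apply_le (r x) v) 2]
  refine (μ.E_mono (by fun_prop) (by fun_prop) hle).trans_eq ?_
  rw [μ.E_sub (by fun_prop) (by fun_prop), Mean.E_const, μ.E_mul_left _ (by fun_prop),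
    ← inner_average, h, real_inner_self_eq_norm_sq, sub_self]

theorem average_mul_of_average_eq {v : H} (h : ρ.average μ r v = v) (s : X → K) :
    ρ.average μ (fun x => s x * r x) v = ρ.average μ s v := by
  refine ext_inner_right ℝ fun w => sub_eq_zero.1 <| (pow_eq_zero_iff two_ne_zero).1 <|
    le_antisymm ?_ (sq_nonneg _)
  have hle x : (inner ℝ (ρ (s x * r x) v) w - inner ℝ (ρ (s x) v) w) ^ 2 ≤
      ‖w‖ ^ 2 * ‖ρ (r x) v - v‖ ^ 2 := by
    rw [apply_mul, ← inner_sub_left, ← map_sub, ← mul_pow, mul_comm, ← sq_abs]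
    refine pow_le_pow_left₀ (abs_nonneg _) ((abs_real_inner_le_norm _ _).trans ?_) 2
    exact mul_le_mul_of_nonneg_right (ρ.norm_apply_le _ _) (norm_nonneg w)
  rw [inner_average, inner_average, ← μ.E_sub (by fun_prop) (by fun_prop)]
  refine (μ.sq_E_le (by fun_prop)).trans
    ((μ.E_mono (by fun_prop) (by fun_prop) hle).trans_eq ?_)
  rw [μ.E_mul_left _ (by fun_prop), ρ.E_norm_sq_sub_of_average_eq h, mul_zero]

end Average

end UnitaryRep

end UnitaryRep

section AffineAverage

variable {K H : Type*} [Field K] [NormedAddCommGroup H] [InnerProductSpace ℝ H]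
  [CompleteSpace H]

theorem eventually_quadratic_ne_zero (b c : K) :
    ∀ᶠ t in cofinite, t ^ 2 + b * t + c ≠ 0 := by
  have hdeg := Polynomial.natDegree_quadratic (a := (1 : K)) (b := b) (c := c) one_ne_zero
  refine (Polynomial.finite_setOfPred_isRoot
    (Polynomial.ne_zero_of_natDegree_gt (hdeg.symm ▸ two_pos))).subset fun t ht => ?_
  simpa using ht

theorem eventually_sq_sub_ne_zero (ε : K) : ∀ᶠ t in cofinite, t ^ 2 - ε ≠ 0 := by
  simpa [sub_eq_add_neg] using eventually_quadratic_ne_zero 0 (-ε)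

theorem sub_div_sq_sub_eq {ε x y : K} (hxy : y + x ≠ 0) :
    x - (x ^ 2 - ε) / (y + x) = (x * y + ε) / (y + x) ∧
      ((x * y + ε) / (y + x)) ^ 2 - ε = (x ^ 2 - ε) * (y ^ 2 - ε) / (y + x) ^ 2 := by
  constructor <;> field_simp <;> ring

namespace UnitaryRep

variable (ρ : UnitaryRep K H) {α β : Mean K}

theorem average_comp_affine (hα : α.IsAffine) {a : K} (ha : a ≠ 0) (b : K) (r : K → K) :
    ρ.average α (fun n => r (a * n + b)) = ρ.average α r :=
  ρ.average_eq_of_law_eq _ _ fun _ hf => hα ha b (hf.comp r)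

theorem isInvariant_average_inv (hα : α.IsAffine) (v : H) :
    ρ.IsInvariant (ρ.average α (fun n => n⁻¹) v) := fun a ha => by
  rw [apply_average, ← ρ.average_comp_affine hα ha 0]
  congr! 3 with n
  rw [add_zero, mul_inv, mul_inv_cancel_left₀ ha]

/-- The average of `ρ ((n + 1) / n)`. -/
noncomputable def succDiv (α : Mean K) : H →L[ℝ] H := ρ.average α fun n => (n + 1) / n

/-- The average of `ρ (n² / (n² - ε))`. -/
noncomputable def sqDiv (ε : K) (α : Mean K) : H →L[ℝ] H :=
  ρ.average α fun n => n ^ 2 / (n ^ 2 - ε)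

/-- The average of `ρ (n / (n² - ε))`. -/
noncomputable def linDiv (ε : K) (α : Mean K) : H →L[ℝ] H :=
  ρ.average α fun n => n / (n ^ 2 - ε)

theorem average_div_of_ne (hα : α.IsAffine) {b b' : K} (hb : b ≠ b') :
    ρ.average α (fun n => (n + b) / (n + b')) = ρ.succDiv α := by
  have h0 := sub_ne_zero.2 hb
  rw [succDiv, ← ρ.average_comp_affine hα h0 (-b')]
  congr 1 with n
  rw [neg_add_cancel_right, ← mul_div_mul_left (n + 1) n h0]
  ring

theorem average_mul_of_succDiv_eq (hα : α.IsAffine) {v : H} (hv : ρ.succDiv α v = v)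
    {b b' : K} (hb : b ≠ b') (r : K → K) :
    ρ.average α (fun n => r n * ((n + b) / (n + b'))) v = ρ.average α r v :=
  ρ.average_mul_of_average_eq (by rwa [ρ.average_div_of_ne hα hb]) r

variable [Infinite K]

theorem average_congr (hα : α.IsAffine) {r s : K → K} (h : r =ᶠ[cofinite] s) :
    ρ.average α r = ρ.average α s :=
  ρ.average_eq_of_law_eq _ _ fun f hf =>
    hα.E_congr (hf.comp r) (hf.comp s) (h.mono fun _ hx => congrArg f hx)

theorem inner_average_of_isInvariant (hα : α.IsAffine) {r : K → K}
    (hr : ∀ᶠ n in cofinite, r n ≠ 0) {e : H} (he : ρ.IsInvariant e) (v : H) :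
    inner ℝ (ρ.average α r v) e = inner ℝ v e := by
  rw [inner_average, ← α.E_const (inner ℝ v e)]
  refine hα.E_congr (by fun_prop) (by fun_prop) (hr.mono fun n hn => ?_)
  dsimp only
  rw [inner_apply_left, he _ (inv_ne_zero hn)]

/-- The law of `x - c x / (y + d x)` is that of `x - y⁻¹`, so `c` and `d` may be chosen to make
`r (x - c x / (y + d x))` factor. -/
theorem average_subInv (hα : α.IsAffine) (hβ : β.IsAffine) {r s : K → K} {u : K → K → K}
    {v v' : H} (c d : K → K)
    (h : ∀ᶠ x in cofinite, c x ≠ 0 ∧ ρ.average β (u x) v = v' ∧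
      ∀ᶠ y in cofinite, r (x - c x / (y + d x)) = s x * u x y) :
    ρ.average (α.subInv β) r v = ρ.average α s v' :=
  ext_inner_right ℝ fun w => by
    rw [inner_average, inner_average, hα.subInv_E hβ d (h.mono fun _ hx => hx.1) (by fun_prop)]
    refine hα.E_congr (by fun_prop) (by fun_prop) (h.mono fun x ⟨_, hv', hr⟩ => ?_)
    dsimp only
    rw [← hv', apply_average, inner_average]
    exact hβ.E_congr (by fun_prop) (by fun_prop) (hr.mono fun y hy => by dsimp only; rw [hy])

theorem succDiv_subInv (hα : α.IsAffine) (hβ : β.IsAffine) (v : H) :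
    ρ.succDiv (α.subInv β) v = ρ.succDiv α (ρ.succDiv β v) := by
  refine ρ.average_subInv hα hβ (u := fun _ y => (y + 1) / y) (fun x => x * (x + 1))
    (fun x => x + 1) ?_
  filter_upwards [eventually_cofinite_ne 0, eventually_cofinite_ne (-1)] with x hx hx1
  have hx1 : x + 1 ≠ 0 := fun h => hx1 (eq_neg_of_add_eq_zero_left h)
  refine ⟨mul_ne_zero hx hx1, rfl, ?_⟩
  filter_upwards [eventually_cofinite_ne 0, eventually_cofinite_ne (-(x + 1))] with y hy hxy
  have hxy : y + (x + 1) ≠ 0 := fun h => hxy (eq_neg_of_add_eq_zero_left h)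
  have ht : x - x * (x + 1) / (y + (x + 1)) = x * y / (y + (x + 1)) := by field_simp; ring
  have ht1 : x * y / (y + (x + 1)) + 1 = (x + 1) * (y + 1) / (y + (x + 1)) := by
    field_simp; ring
  rw [ht, ht1]
  field_simp

theorem sqDiv_subInv {ε : K} (hα : α.IsAffine) (hβ : β.IsAffine) (hε : ε ≠ 0) {v : H}
    (hv : ρ.succDiv β v = v) : ρ.sqDiv ε (α.subInv β) v = ρ.sqDiv ε α (ρ.sqDiv ε β v) := by
  refine ρ.average_subInv hα hβ (fun x => x ^ 2 - ε) (fun x => x)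
    (u := fun x y => y ^ 2 / (y ^ 2 - ε) * ((y + ε / x) / (y + 0)) * ((y + ε / x) / (y + 0))) ?_
  filter_upwards [eventually_cofinite_ne 0, eventually_sq_sub_ne_zero ε] with x hx hxε
  have hb : ε / x ≠ 0 := div_ne_zero hε hx
  refine ⟨hxε, ?_, ?_⟩
  · rw [ρ.average_mul_of_succDiv_eq hβ hv hb, ρ.average_mul_of_succDiv_eq hβ hv hb, sqDiv]
  filter_upwards [eventually_cofinite_ne 0, eventually_cofinite_ne (-x),
    eventually_sq_sub_ne_zero ε] with y hy hxy hyε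
  have hxy : y + x ≠ 0 := fun h => hxy (eq_neg_of_add_eq_zero_left h)
  obtain ⟨ht, htε⟩ := sub_div_sq_sub_eq (ε := ε) hxy
  rw [ht, htε, add_zero]
  field_simp

theorem linDiv_subInv {ε : K} (hα : α.IsAffine) (hβ : β.IsAffine) (hε : ε ≠ 0) {v : H}
    (hv : ρ.succDiv β v = v) : ρ.linDiv ε (α.subInv β) v = ρ.linDiv ε α (ρ.sqDiv ε β v) := by
  refine ρ.average_subInv hα hβ (fun x => x ^ 2 - ε) (fun x => x)
    (u := fun x y => y ^ 2 / (y ^ 2 - ε) * ((y + ε / x) / (y + 0)) * ((y + x) / (y + 0))) ?_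
  filter_upwards [eventually_cofinite_ne 0, eventually_sq_sub_ne_zero ε] with x hx hxε
  refine ⟨hxε, ?_, ?_⟩
  · rw [ρ.average_mul_of_succDiv_eq hβ hv hx,
      ρ.average_mul_of_succDiv_eq hβ hv (div_ne_zero hε hx), sqDiv]
  filter_upwards [eventually_cofinite_ne 0, eventually_cofinite_ne (-x),
    eventually_sq_sub_ne_zero ε] with y hy hxy hyε
  have hxy : y + x ≠ 0 := fun h => hxy (eq_neg_of_add_eq_zero_left h)
  obtain ⟨ht, htε⟩ := sub_div_sq_sub_eq (ε := ε) hxy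
  rw [ht, htε, add_zero]
  field_simp

end UnitaryRep

end AffineAverage

section Cesaro

variable {K H : Type*} [Field K] [NormedAddCommGroup H] [InnerProductSpace ℝ H]
  [CompleteSpace H]

namespace Mean

/-- A shift invariant mean on `ℕ`, that is, a Banach limit. -/
def IsShiftInvariant (L : Mean ℕ) : Prop :=
  ∀ ⦃f : ℕ → ℝ⦄, IsBddFun f → L.E (fun n => f (n + 1)) = L.E f

/-- The means `l`, `l.subInv l`, `l.subInv (l.subInv l)`, …. -/
def iterSubInv (l : Mean K) (k : ℕ) : Mean K := l.subInv^[k] l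

theorem iterSubInv_succ (l : Mean K) (k : ℕ) :
    l.iterSubInv (k + 1) = l.subInv (l.iterSubInv k) :=
  Function.iterate_succ_apply' ..

theorem IsAffine.iterSubInv {l : Mean K} (hl : l.IsAffine) (k : ℕ) :
    (l.iterSubInv k).IsAffine := by
  induction k with
  | zero => exact hl
  | succ k ih => exact iterSubInv_succ l k ▸ hl.subInv ih

/-- The average of the iterates `l.iterSubInv k` with respect to `L`. -/
def cesaro (l : Mean K) (L : Mean ℕ) : Mean K := L.bind l.iterSubInv

theorem IsAffine.cesaro {l : Mean K} (hl : l.IsAffine) (L : Mean ℕ) : (l.cesaro L).IsAffine :=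
  .bind hl.iterSubInv L

end Mean

namespace UnitaryRep

variable (ρ : UnitaryRep K H) {l : Mean K} {L : Mean ℕ} {r : K → K} {v : H}

theorem average_average_cesaro (hL : L.IsShiftInvariant)
    (h : ∀ k, ρ.average (l.iterSubInv (k + 1)) r v =
      ρ.average l r (ρ.average (l.iterSubInv k) r v)) :
    ρ.average l r (ρ.average (l.cesaro L) r v) = ρ.average (l.cesaro L) r v :=
  ext_inner_right ℝ fun w => by
    calc inner ℝ (ρ.average l r (ρ.average (l.cesaro L) r v)) w
        = L.E fun k => inner ℝ (ρ.average (l.iterSubInv (k + 1)) r v) w := by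
          rw [← ContinuousLinearMap.adjoint_inner_right, inner_average]
          refine congrArg L.E (funext fun k => ?_)
          rw [h, ← ContinuousLinearMap.adjoint_inner_right, inner_average]
      _ = L.E fun k => inner ℝ (ρ.average (l.iterSubInv k) r v) w :=
          hL (f := fun k => inner ℝ (ρ.average (l.iterSubInv k) r v) w) (by fun_prop)
      _ = inner ℝ (ρ.average (l.cesaro L) r v) w := by
          simp_rw [inner_average]
          rfl

theorem average_iterSubInv_of_average_eq
    (h : ∀ k, ρ.average (l.iterSubInv (k + 1)) r v =
      ρ.average l r (ρ.average (l.iterSubInv k) r v)) (hv : ρ.average l r v = v) (k : ℕ) :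
    ρ.average (l.iterSubInv k) r v = v := by
  induction k with
  | zero => exact hv
  | succ k ih => rw [h, ih, hv]

theorem average_cesaro_of_average_eq
    (h : ∀ k, ρ.average (l.iterSubInv (k + 1)) r v =
      ρ.average l r (ρ.average (l.iterSubInv k) r v)) (hv : ρ.average l r v = v) :
    ρ.average (l.cesaro L) r v = v :=
  ext_inner_right ℝ fun w => by
    calc inner ℝ (ρ.average (l.cesaro L) r v) w
        = L.E fun k => inner ℝ (ρ.average (l.iterSubInv k) r v) w := by
          simp_rw [inner_average]
          rfl
      _ = inner ℝ v w := by
          simp_rw [ρ.average_iterSubInv_of_average_eq h hv, Mean.E_const]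

variable [Infinite K] (hl : l.IsAffine) (hL : L.IsShiftInvariant)

include hl

theorem succDiv_iterSubInv_succ (v : H) (k : ℕ) :
    ρ.succDiv (l.iterSubInv (k + 1)) v = ρ.succDiv l (ρ.succDiv (l.iterSubInv k) v) := by
  rw [Mean.iterSubInv_succ, ρ.succDiv_subInv hl (hl.iterSubInv k)]

include hL

theorem succDiv_succDiv_cesaro (v : H) :
    ρ.succDiv l (ρ.succDiv (l.cesaro L) v) = ρ.succDiv (l.cesaro L) v :=
  ρ.average_average_cesaro hL (ρ.succDiv_iterSubInv_succ hl v)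

theorem succDiv_cesaro_succDiv_cesaro (v : H) :
    ρ.succDiv (l.cesaro L) (ρ.succDiv (l.cesaro L) v) = ρ.succDiv (l.cesaro L) v :=
  ρ.average_cesaro_of_average_eq (ρ.succDiv_iterSubInv_succ hl _)
    (ρ.succDiv_succDiv_cesaro hl hL v)

theorem sqDiv_iterSubInv_succ {ε : K} (hε : ε ≠ 0) (hv : ρ.succDiv (l.cesaro L) v = v) (k : ℕ) :
    ρ.sqDiv ε (l.iterSubInv (k + 1)) v = ρ.sqDiv ε l (ρ.sqDiv ε (l.iterSubInv k) v) := by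
  rw [Mean.iterSubInv_succ, ρ.sqDiv_subInv hl (hl.iterSubInv k) hε]
  exact ρ.average_iterSubInv_of_average_eq (ρ.succDiv_iterSubInv_succ hl v)
    (hv ▸ ρ.succDiv_succDiv_cesaro hl hL v) k

theorem sqDiv_cesaro_sqDiv_cesaro {ε : K} (hε : ε ≠ 0) (hv : ρ.succDiv (l.cesaro L) v = v) :
    ρ.sqDiv ε (l.cesaro L) (ρ.sqDiv ε (l.cesaro L) v) = ρ.sqDiv ε (l.cesaro L) v := by
  have hw : ρ.succDiv (l.cesaro L) (ρ.sqDiv ε (l.cesaro L) v) = ρ.sqDiv ε (l.cesaro L) v := by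
    rw [succDiv, sqDiv, average_average_comm, ← succDiv, hv]
  exact ρ.average_cesaro_of_average_eq (ρ.sqDiv_iterSubInv_succ hl hL hε hw)
    (ρ.average_average_cesaro hL (ρ.sqDiv_iterSubInv_succ hl hL hε hv))

theorem isInvariant_linDiv_of_succDiv_eq {ε : K} (hε : ε ≠ 0)
    (hv : ρ.succDiv (l.cesaro L) v = v) :
    ρ.IsInvariant (ρ.linDiv ε ((l.cesaro L).subInv (l.cesaro L)) v) := by
  have hβ := hl.cesaro L
  have hlin : ρ.linDiv ε (l.cesaro L) =
      ρ.average (l.cesaro L) fun n => n⁻¹ * (n ^ 2 / (n ^ 2 - ε)) := by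
    refine congrArg (ρ.average _) (funext fun n => ?_)
    obtain rfl | hn := eq_or_ne n 0
    · simp
    · field_simp
  rw [ρ.linDiv_subInv hβ hβ hε hv, hlin,
    ρ.average_mul_of_average_eq (ρ.sqDiv_cesaro_sqDiv_cesaro hl hL hε hv)]
  exact ρ.isInvariant_average_inv hβ _

end UnitaryRep

end Cesaro

section Kernel

variable {K H : Type*} [Field K] [NormedAddCommGroup H] [InnerProductSpace ℝ H]
  [CompleteSpace H]

theorem tendsto_sq_cofinite : Tendsto (fun x : K => x ^ 2) cofinite cofinite :=
  Tendsto.cofinite_of_finite_preimage_singleton fun a => by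
    change {x : K | x ^ 2 = a}.Finite
    simpa [sub_eq_zero] using eventually_cofinite.1 (eventually_sq_sub_ne_zero a)

theorem Mean.IsAffine.prod_E_vadd {β : Mean K} (hβ : β.IsAffine) (b : K) {f : K × K → ℝ}
    (hf : IsBddFun f) : (β.prod β).E (fun p => f (b +ᵥ p)) = (β.prod β).E f := by
  calc β.E (fun x => β.E fun y => f (b + x, b + y))
      = β.E fun x => β.E fun y => f (b + x, y) := by
        congr 1 with x
        simpa only [add_comm] using hβ.E_add_right b (f := fun y => f (b + x, y)) (by fun_prop)
    _ = β.E fun x => β.E fun y => f (x, y) := by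
        simpa only [add_comm] using
          hβ.E_add_right b (f := fun x => β.E fun y => f (x, y)) (by fun_prop)

/-- The value of `t / (t² - ε)` at `t = (x * y + ε) / (y + x)`. -/
def linDivKernel (ε x y : K) : K := (x * y + ε) * (y + x) / ((x ^ 2 - ε) * (y ^ 2 - ε))

namespace UnitaryRep

variable (ρ : UnitaryRep K H) {α β : Mean K} {v : H}

/-- The average of the quotient `linDivKernel ε (q * a) n / linDivKernel ε (q * b) n`, where
`x = q²`, rescaled and up to factors not depending on `n`. -/
noncomputable def crossAverage (ε : K) (β : Mean K) (x a b : K) : H →L[ℝ] H :=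
  ρ.average β fun n => (n + x * a) / (n + x * b) * ((a * n + ε) / (b * n + ε))

@[fun_prop]
theorem isBddFun_crossAverage (ε : K) (β : Mean K) (x a b : X → K) (v : H) :
    IsBddFun fun y => ρ.crossAverage ε β (x y) (a y) (b y) v :=
  ρ.isBddFun_average _ _ v

theorem norm_sq_crossAverage (ε : K) (β : Mean K) (x k z : K) (v : H) :
    ‖ρ.crossAverage ε β x (z + k) z v‖ ^ 2 = (β.prod β).E fun p => inner ℝ
      (ρ ((x * z + p.1 + x * k) / (x * z + p.1) / ((x * z + p.2 + x * k) / (x * z + p.2))) v)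
      (ρ (((z + k) * p.2 + ε) / (z * p.2 + ε) / (((z + k) * p.1 + ε) / (z * p.1 + ε))) v) := by
  rw [crossAverage, norm_sq_average]
  congr 1 with p
  have hshift n : n + x * (z + k) = x * z + n + x * k := by ring
  have hdiv (a b c : K) : a * (b / c) = a / (c / b) := by rw [div_div_eq_mul_div, mul_div_assoc]
  rw [inner_apply_apply, mul_div_mul_comm, hdiv]
  simp only [hshift, add_comm _ (x * z)]

variable [Infinite K]

theorem E_inner_div_div (hβ : β.IsAffine) {k x y : K} (hk : k ≠ 0) (hxy : x ≠ y) (v : H) :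
    ((β.prod β).E fun p => inner ℝ
      (ρ ((p.1 + x * k) / p.1 / ((p.2 + x * k) / p.2)) v)
      (ρ ((p.1 + y * k) / p.1 / ((p.2 + y * k) / p.2)) v)) = ‖ρ.succDiv β v‖ ^ 2 := by
  have hratio : ρ.average β (fun n => (n + x * k) / n / ((n + y * k) / n)) = ρ.succDiv β := by
    rw [← ρ.average_div_of_ne hβ ((mul_left_injective₀ hk).ne hxy)]
    exact ρ.average_congr hβ ((eventually_cofinite_ne 0).mono fun n hn =>
      div_div_div_cancel_right₀ hn _ _)
  rw [← hratio, norm_sq_average]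
  congr 1 with p
  rw [inner_apply_apply, div_div_div_comm]

/-- The translate by `x * z` in `norm_sq_crossAverage` decouples different `x`, so
Bessel's inequality applies to the family indexed by `x`. -/
theorem tendsto_E_norm_sq_crossAverage (hα : α.IsAffine) (hβ : β.IsAffine)
    (hv : ρ.succDiv β v = 0) (ε : K) {k : K} (hk : k ≠ 0) :
    Tendsto (fun x => α.E fun z => ‖ρ.crossAverage ε β x (z + k) z v‖ ^ 2) cofinite (𝓝 0) := by
  set F : K → K × K → H := fun x p => ρ ((p.1 + x * k) / p.1 / ((p.2 + x * k) / p.2)) v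
  have hF x p : ‖F x p‖ ≤ ‖v‖ := ρ.norm_apply_le _ v
  have hsum (s : Finset K) : (α.prod (β.prod β)).E
      (fun p => ‖∑ x ∈ s, F x ((x * p.1) +ᵥ p.2)‖ ^ 2) ≤ 3 * ‖v‖ ^ 2 * #s := by
    have horth : Pairwise fun x y => (β.prod β).E (fun p => inner ℝ (F x p) (F y p)) ≤ 0 :=
      fun x y hxy => by simp [F, ρ.E_inner_div_div hβ hk hxy, hv]
    linarith [hα.E_norm_sq_sum_vadd_le (μ := β.prod β) (fun b _ => hβ.prod_E_vadd b) hF s,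
      (β.prod β).E_norm_sq_sum_le hF horth s]
  refine tendsto_order.2 ⟨fun a ha => .of_forall fun x => ha.trans_le
    (α.const_le_E (by fun_prop) fun z => sq_nonneg _), fun a ha => ?_⟩
  simp_rw [norm_sq_crossAverage]
  exact (α.prod (β.prod β)).eventually_E_inner_lt (G := fun p => ρ (((p.1 + k) * p.2.2 + ε) /
    (p.1 * p.2.2 + ε) / (((p.1 + k) * p.2.1 + ε) / (p.1 * p.2.1 + ε))) v)
    (by fun_prop) (fun x => by fun_prop) hsum ha

theorem tendsto_E_norm_sq_crossAverage_sq (hα : α.IsAffine) (hβ : β.IsAffine)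
    (hv : ρ.succDiv β v = 0) (ε : K) {i j : K} (hij : i ≠ j) :
    Tendsto (fun q => α.E fun z => ‖ρ.crossAverage ε β (q ^ 2) (z + i) (z + j) v‖ ^ 2)
      cofinite (𝓝 0) := by
  refine Tendsto.congr (fun q => ?_)
    ((ρ.tendsto_E_norm_sq_crossAverage hα hβ hv ε (sub_ne_zero.2 hij)).comp tendsto_sq_cofinite)
  rw [Function.comp_apply, ← hα.E_add_right j (by fun_prop)]
  simp only [add_assoc, add_sub_cancel]

theorem average_linDivKernel_div (hβ : β.IsAffine) (ε : K) {q : K} (hq : q ≠ 0) (a b : K)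
    (v : H) :
    ρ.average β (fun n => linDivKernel ε (q * a) n / linDivKernel ε (q * b) n) v =
      ρ (((q * b) ^ 2 - ε) / ((q * a) ^ 2 - ε)) (ρ.crossAverage ε β (q ^ 2) a b v) := by
  have hscale x n : q⁻¹ * n + 0 + q * x = q⁻¹ * (n + q ^ 2 * x) := by field_simp; ring
  have hcancel x n : q * x * (q⁻¹ * n + 0) = x * n := by field_simp; ring
  have hcross : ρ.crossAverage ε β (q ^ 2) a b = ρ.average β fun n =>
      (n + q * a) / (n + q * b) * ((q * a * n + ε) / (q * b * n + ε)) := by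
    rw [← ρ.average_comp_affine hβ (inv_ne_zero hq) 0, crossAverage]
    simp only [hscale, hcancel, mul_div_mul_left _ _ (inv_ne_zero hq)]
  rw [hcross, apply_average]
  refine congrArg (· v) (ρ.average_congr hβ ?_)
  filter_upwards [eventually_sq_sub_ne_zero ε] with n hn
  rw [linDivKernel, linDivKernel, ← div_div, ← div_div, div_div_div_cancel_right₀ hn,
    div_div_div_eq, mul_comm _ (_ - ε), mul_div_mul_comm, mul_div_mul_comm,
    mul_comm (_ / (n + _))]

theorem sq_E_inner_linDivKernel_le (hβ : β.IsAffine) (ε : K) {q : K} (hq : q ≠ 0)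
    (a b : K) (v : H) :
    (β.E fun n => inner ℝ (ρ (linDivKernel ε (q * a) n) v)
      (ρ (linDivKernel ε (q * b) n) v)) ^ 2 ≤
      ‖v‖ ^ 2 * ‖ρ.crossAverage ε β (q ^ 2) a b v‖ ^ 2 := by
  simp_rw [inner_apply_apply]
  rw [← inner_average, ρ.average_linDivKernel_div hβ ε hq, ← mul_pow, mul_comm ‖v‖,
    ← sq_abs]
  exact pow_le_pow_left₀ (abs_nonneg _) ((abs_real_inner_le_norm _ _).trans
    (mul_le_mul_of_nonneg_right (ρ.norm_apply_le _ _) (norm_nonneg v))) 2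

theorem linDiv_subInv_eq_average (hα : α.IsAffine) (hβ : β.IsAffine) (ε : K) :
    ρ.linDiv ε (α.subInv β) = ρ.average (α.prod β) fun p => linDivKernel ε p.1 p.2 := by
  refine ρ.average_eq_of_law_eq _ _ fun f hf => ?_
  rw [hα.subInv_E hβ (fun x => x) (eventually_sq_sub_ne_zero ε) (by fun_prop)]
  refine congrArg α.E (funext fun x => hβ.E_congr (by fun_prop) (by fun_prop) ?_)
  filter_upwards [eventually_cofinite_ne (-x)] with y hy
  have hxy : y + x ≠ 0 := fun h => hy (eq_neg_of_add_eq_zero_left h)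
  obtain ⟨ht, htε⟩ := sub_div_sq_sub_eq (ε := ε) hxy
  rw [ht, htε, linDivKernel]
  field_simp

theorem E_inner_linDivKernel_eq_zero (hα : α.IsAffine) (hβ : β.IsAffine)
    (hv : ρ.succDiv β v = 0) (ε : K) {i j : K} (hij : i ≠ j) :
    ((α.prod (α.prod β)).E fun p => inner ℝ (ρ (linDivKernel ε (p.2.1 + p.1 * i) p.2.2) v)
      (ρ (linDivKernel ε (p.2.1 + p.1 * j) p.2.2) v)) = 0 := by
  set h : K → ℝ := fun q => α.E fun s => β.E fun n =>
    inner ℝ (ρ (linDivKernel ε (s + q * i) n) v) (ρ (linDivKernel ε (s + q * j) n) v)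
  have hh : IsBddFun h := by fun_prop
  have hle : ∀ᶠ q in cofinite, h q ^ 2 ≤
      ‖v‖ ^ 2 * α.E fun z => ‖ρ.crossAverage ε β (q ^ 2) (z + i) (z + j) v‖ ^ 2 := by
    filter_upwards [eventually_cofinite_ne 0] with q hq
    have hscale : h q = α.E fun z => β.E fun n => inner ℝ
        (ρ (linDivKernel ε (q * (z + i)) n) v) (ρ (linDivKernel ε (q * (z + j)) n) v) := by
      simp only [mul_add]
      exact (hα.E_mul_left hq (f := fun s => β.E fun n => inner ℝ
        (ρ (linDivKernel ε (s + q * i) n) v) (ρ (linDivKernel ε (s + q * j) n) v))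
        (by fun_prop)).symm
    rw [hscale, ← α.E_mul_left _ (by fun_prop)]
    exact (α.sq_E_le (by fun_prop)).trans (α.E_mono (by fun_prop) (by fun_prop) fun z =>
      ρ.sq_E_inner_linDivKernel_le hβ ε hq _ _ v)
  refine (pow_eq_zero_iff two_ne_zero).1 (le_antisymm ((α.sq_E_le hh).trans_eq ?_) (sq_nonneg _))
  refine hα.E_eq_zero_of_tendsto (by fun_prop) (squeeze_zero' (.of_forall fun q => sq_nonneg _)
    hle ?_)
  simpa using (ρ.tendsto_E_norm_sq_crossAverage_sq hα hβ hv ε hij).const_mul (‖v‖ ^ 2)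

theorem linDiv_subInv_eq_zero (hα : α.IsAffine) (hβ : β.IsAffine) (hv : ρ.succDiv β v = 0)
    (ε : K) : ρ.linDiv ε (α.subInv β) v = 0 := by
  rw [ρ.linDiv_subInv_eq_average hα hβ]
  set g := ρ.average (α.prod β) (fun p => linDivKernel ε p.1 p.2) v with hg
  refine (α.prod (α.prod β)).eq_zero_of_pairwise_E_inner_nonpos
    (F := fun i p => ρ (linDivKernel ε (p.2.1 + p.1 * i) p.2.2) v) (g := g)
    (fun i p => ρ.norm_apply_le _ v)
    (fun i j hij => (ρ.E_inner_linDivKernel_eq_zero hα hβ hv ε hij).le)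
    (Frequently.of_forall fun i => ?_)
  calc (α.E fun q => α.E fun s => β.E fun n => inner ℝ (ρ (linDivKernel ε (s + q * i) n) v) g)
      = α.E fun _ => α.E fun s => β.E fun n => inner ℝ (ρ (linDivKernel ε s n) v) g := by
        congr 1 with q
        exact hα.E_add_right (q * i)
          (f := fun s => β.E fun n => inner ℝ (ρ (linDivKernel ε s n) v) g) (by fun_prop)
    _ = ‖g‖ ^ 2 := by
        rw [Mean.E_const, ← real_inner_self_eq_norm_sq, hg, inner_average]
        rfl

section Cesaro

variable {l : Mean K} {L : Mean ℕ} (hl : l.IsAffine) (hL : L.IsShiftInvariant)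

include hl hL

theorem isInvariant_linDiv_cesaro {ε : K} (hε : ε ≠ 0) (v : H) :
    ρ.IsInvariant (ρ.linDiv ε ((l.cesaro L).subInv (l.cesaro L)) v) := by
  have hβ := hl.cesaro L
  set w := ρ.succDiv (l.cesaro L) v
  have hw : ρ.succDiv (l.cesaro L) w = w := ρ.succDiv_cesaro_succDiv_cesaro hl hL v
  have hvw : ρ.linDiv ε ((l.cesaro L).subInv (l.cesaro L)) (v - w) = 0 :=
    ρ.linDiv_subInv_eq_zero hβ hβ (by rw [map_sub, hw, sub_self]) ε
  rw [sub_eq_zero.1 ((map_sub _ v w).symm.trans hvw)]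
  exact ρ.isInvariant_linDiv_of_succDiv_eq hl hL hε hw

theorem frequently_inner_apply_linDiv_ne_zero {ε κ : K} (hε : ε ≠ 0) (hκ : κ ≠ 0) {v e : H}
    (he : ρ.IsInvariant e) (hve : inner ℝ v e ≠ 0) :
    ∃ᶠ t in cofinite, inner ℝ (ρ (κ * (t / (t ^ 2 - ε))) v) v ≠ 0 := by
  set γ := (l.cesaro L).subInv (l.cesaro L)
  have hγ : γ.IsAffine := (hl.cesaro L).subInv (hl.cesaro L)
  have hJ : ρ.IsInvariant (ρ.linDiv ε γ v) := ρ.isInvariant_linDiv_cesaro hl hL hε v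
  have hne : ∀ᶠ t : K in cofinite, t / (t ^ 2 - ε) ≠ 0 := by
    filter_upwards [eventually_cofinite_ne 0, eventually_sq_sub_ne_zero ε] with t ht htε
      using div_ne_zero ht htε
  by_contra hzero
  simp only [not_frequently, not_not] at hzero
  have hJv : inner ℝ (ρ.linDiv ε γ v) v = 0 := by
    rw [← hJ κ hκ, linDiv, apply_average, inner_average, ← γ.E_const 0]
    exact hγ.E_congr (by fun_prop) (by fun_prop) hzero
  have hJJ : ρ.linDiv ε γ v = 0 := by
    rw [← inner_self_eq_zero (𝕜 := ℝ), ← hJv, real_inner_comm v]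
    exact ρ.inner_average_of_isInvariant hγ hne hJ v
  refine hve ?_
  rw [← ρ.inner_average_of_isInvariant hγ hne he v, ← linDiv, hJJ, inner_zero_left]

end Cesaro

end UnitaryRep

end Kernel

section Koopman

open UniformSpace

variable (X) in
/-- The space of bounded real functions on `X`. -/
def bddFunctions : Submodule ℝ (X → ℝ) where
  carrier := {f | IsBddFun f}
  add_mem' hf hg := hf.add hg
  zero_mem' := .const 0
  smul_mem' c _ hf := (IsBddFun.const c).mul hf

namespace Mean

/-- The space of bounded functions with the semi-inner product `⟪f, g⟫ = μ.E (f * g)`. Its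
completion plays the role of `L²` of the finitely additive mean `μ`. -/
def PreL2 (_μ : Mean X) : Type _ := bddFunctions X

namespace PreL2

variable {μ : Mean X}

noncomputable instance : AddCommGroup (PreL2 μ) := inferInstanceAs (AddCommGroup (bddFunctions X))

noncomputable instance : Module ℝ (PreL2 μ) := inferInstanceAs (Module ℝ (bddFunctions X))

instance : CoeFun (PreL2 μ) fun _ => X → ℝ := ⟨fun f => f.1⟩

@[fun_prop]
theorem isBddFun (f : PreL2 μ) : IsBddFun fun x => f x := f.2

@[ext]
theorem ext {f g : PreL2 μ} (h : ∀ x, f x = g x) : f = g := Subtype.ext (funext h)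

theorem add_apply (f g : PreL2 μ) (x : X) : (f + g) x = f x + g x := rfl

theorem smul_apply (c : ℝ) (f : PreL2 μ) (x : X) : (c • f) x = c * f x := rfl

variable (μ) in
/-- The semi-inner product of `Mean.PreL2`. -/
@[reducible]
noncomputable def innerCore : PreInnerProductSpace.Core ℝ (PreL2 μ) where
  inner f g := μ.E fun x => f x * g x
  conj_inner_symm f g := by simp [mul_comm]
  re_inner_nonneg f := μ.const_le_E (by fun_prop) fun x => mul_self_nonneg _
  add_left f g h := by
    simp_rw [add_apply, add_mul]
    exact μ.E_add (by fun_prop) (by fun_prop)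
  smul_left f g c := by
    simp_rw [smul_apply, mul_assoc]
    exact μ.E_mul_left c (by fun_prop)

noncomputable instance : SeminormedAddCommGroup (PreL2 μ) :=
  @InnerProductSpace.Core.toSeminormedAddCommGroup ℝ (PreL2 μ) _ _ _ (innerCore μ)

noncomputable instance : InnerProductSpace ℝ (PreL2 μ) := InnerProductSpace.ofCore (innerCore μ)

theorem inner_eq (f g : PreL2 μ) : inner ℝ f g = μ.E fun x => f x * g x := rfl

/-- The Koopman operator of a mean-preserving map. -/
noncomputable def koopman (g : X → X)
    (hg : ∀ ⦃f⦄, IsBddFun f → μ.E (fun x => f (g x)) = μ.E f) : PreL2 μ →L[ℝ] PreL2 μ :=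
  LinearMap.mkContinuous
    { toFun f := ⟨fun x => f (g x), f.2.comp g⟩
      map_add' _ _ := rfl
      map_smul' _ _ := rfl }
    1 fun f => by
      rw [one_mul, ← sq_le_sq₀ (norm_nonneg _) (norm_nonneg _), ← real_inner_self_eq_norm_sq,
        ← real_inner_self_eq_norm_sq]
      exact (hg (f := fun x => f x * f x) (by fun_prop)).le

theorem koopman_apply {g : X → X} (hg : ∀ ⦃f⦄, IsBddFun f → μ.E (fun x => f (g x)) = μ.E f)
    (f : PreL2 μ) (x : X) : koopman g hg f x = f (g x) := rfl

end PreL2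

end Mean

namespace UnitaryRep

variable {K H : Type*} [CommGroupWithZero K] [SeminormedAddCommGroup H] [InnerProductSpace ℝ H]

/-- The extension of a representation to the Hilbert space completion. -/
noncomputable def completion (ρ : UnitaryRep K H) : UnitaryRep K (Completion H) where
  toFun x := (ρ x).completion
  map_zero' := by
    ext v
    induction v using Completion.induction_on with
    | hp => exact isClosed_eq (by fun_prop) (by fun_prop)
    | ih v => simp [Completion.coe_zero]
  map_one' := by
    ext v
    induction v using Completion.induction_on with
    | hp => exact isClosed_eq (by fun_prop) (by fun_prop)
    | ih v => simp
  map_mul' x y := by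
    ext v
    induction v using Completion.induction_on with
    | hp => exact isClosed_eq (by fun_prop) (by fun_prop)
    | ih v => simp
  inner_toFun x v w := by
    induction v, w using Completion.induction_on₂ with
    | hp => exact isClosed_eq (by fun_prop) (by fun_prop)
    | ih v w =>
      simp only [ContinuousLinearMap.completion_apply_coe, Completion.inner_coe, inner_apply_left]

theorem completion_apply_coe (ρ : UnitaryRep K H) (x : K) (v : H) :
    ρ.completion x (v : Completion H) = (ρ x v : H) :=
  (ρ x).completion_apply_coe v

end UnitaryRep

end Koopman

section Dilation

namespace Mean

/-- A mean on `ℚ` which is carried by the positive integers and invariant under dilation by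
positive rationals. -/
structure IsMulInvariant (M : Mean ℚ) : Prop where
  E_congr ⦃f g : ℚ → ℝ⦄ : (∀ n : ℕ, 0 < n → f n = g n) → M.E f = M.E g
  E_mul_left ⦃q : ℚ⦄ (hq : 0 < q) ⦃f : ℚ → ℝ⦄ :
    IsBddFun f → M.E (fun x => f (q * x)) = M.E f

/-- The law of `n / c`, where first `n` is averaged over `L` and then `c` over `M`. -/
def quotientMean (M : Mean ℚ) (L : Mean ℕ) : Mean ℚ := M.bind fun c => L.map fun n => n / c

/-- The law of `s * x`, with `x` distributed according to `μ` and `s` a uniform random sign. -/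
noncomputable def symm (μ : Mean ℚ) : Mean ℚ :=
  (uniform {1, -1} (insert_nonempty _ _)).bind fun s => μ.map (s * ·)

theorem symm_E (μ : Mean ℚ) (f : ℚ → ℝ) : μ.symm.E f = (μ.E f + μ.E fun x => f (-x)) / 2 := by
  change 𝔼 s ∈ ({1, -1} : Finset ℚ), μ.E (fun x => f (s * x)) = _
  have hne : (1 : ℚ) ≠ -1 := by norm_num
  rw [expect_eq_sum_div_card, sum_pair hne, card_pair hne]
  simp

theorem IsShiftInvariant.E_add {L : Mean ℕ} (hL : L.IsShiftInvariant) (c : ℕ) {f : ℕ → ℝ}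
    (hf : IsBddFun f) : L.E (fun n => f (n + c)) = L.E f := by
  induction c with
  | zero => rfl
  | succ c ih =>
    simp_rw [← ih, ← hL (hf.comp (· + c)), add_assoc, add_comm c]

theorem exists_isShiftInvariant : ∃ L : Mean ℕ, L.IsShiftInvariant := by
  refine ⟨limUniform (hyperfilter ℕ) (fun N => range (N + 1)) fun N => nonempty_range_add_one,
    fun f hf => limUniform_E_comp _ (add_left_injective 1) ?_ hf⟩
  have hcard (N : ℕ) : #(range (N + 1) ∩ (range (N + 1)).image (· + 1)) = N := by
    rw [range_eq_Ico, image_add_right_Ico, Ico_inter_Ico, Nat.card_Ico]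
    simp
  simp_rw [hcard, card_range, Nat.cast_add_one]
  exact tendsto_natCast_div_add_atTop (1 : ℝ) |>.mono_left Nat.hyperfilter_le_atTop

namespace IsMulInvariant

variable {M : Mean ℚ} (hM : M.IsMulInvariant) {L : Mean ℕ}

include hM

theorem exists_nat_of_E_ne_zero {f : ℚ → ℝ} (hf : IsBddFun f) (h : M.E f ≠ 0) {q : ℚ}
    (hq : 0 < q) : ∃ n : ℕ, 0 < n ∧ f (q * n) ≠ 0 := by
  contrapose! h
  rw [← hM.E_mul_left hq hf, ← M.E_const 0]
  exact hM.E_congr h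

theorem E_add_one_quotientMean (hL : L.IsShiftInvariant) {f : ℚ → ℝ} (hf : IsBddFun f) :
    (M.quotientMean L).E (fun x => f (x + 1)) = (M.quotientMean L).E f := by
  refine hM.E_congr fun c hc => ?_
  have hc' : (c : ℚ) ≠ 0 := by exact_mod_cast hc.ne'
  change L.E (fun n => f (n / c + 1)) = L.E (fun n => f (n / c))
  rw [← hL.E_add c (f := fun n => f (n / c)) (by fun_prop)]
  simp_rw [Nat.cast_add, add_div, div_self hc']

theorem E_mul_left_quotientMean {a : ℚ} (ha : 0 < a) {f : ℚ → ℝ} (hf : IsBddFun f) :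
    (M.quotientMean L).E (fun x => f (a * x)) = (M.quotientMean L).E f := by
  refine Eq.trans ?_ (hM.E_mul_left (inv_pos.2 ha) (f := fun c => L.E fun n => f (n / c))
    (by fun_prop))
  change M.E (fun c => L.E fun n => f (a * (n / c))) = _
  simp_rw [inv_mul_eq_div, div_div_eq_mul_div, mul_div_assoc', mul_comm a]

theorem isAffine_symm_quotientMean (hL : L.IsShiftInvariant) :
    (M.quotientMean L).symm.IsAffine := by
  refine .of_mul_of_add_one (fun a ha f hf => ?_) fun f hf => ?_
  · obtain ha | ha := lt_or_gt_of_ne ha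
    · rw [symm_E, symm_E, add_comm,
        ← hM.E_mul_left_quotientMean (neg_pos.2 ha) (f := f) hf,
        ← hM.E_mul_left_quotientMean (neg_pos.2 ha) (f := fun x => f (-x)) (by fun_prop)]
      simp
    · rw [symm_E, symm_E, hM.E_mul_left_quotientMean ha hf,
        ← hM.E_mul_left_quotientMean ha (f := fun x => f (-x)) (by fun_prop)]
      simp
  · rw [symm_E, symm_E, hM.E_add_one_quotientMean hL hf,
      ← hM.E_add_one_quotientMean hL (f := fun x => f (-x + 1)) (by fun_prop)]
    simp

/-- The representation of `ℚˣ` in which `x` acts by dilation by `|x|`. -/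
noncomputable def dilationRep : UnitaryRep ℚ (PreL2 M) where
  toFun x := if hx : x = 0 then 0 else
    PreL2.koopman (|x| * ·) (hM.E_mul_left (abs_pos.2 hx))
  map_zero' := dif_pos rfl
  map_one' := by
    ext f x
    simp [PreL2.koopman_apply]
  map_mul' x y := by
    by_cases hx : x = 0
    · simp [hx]
    by_cases hy : y = 0
    · simp [hy]
    ext f q
    simp [hx, hy, PreL2.koopman_apply, abs_mul, mul_assoc, mul_left_comm]
  inner_toFun x f g := by
    by_cases hx : x = 0
    · simp [hx]
    simp only [hx, inv_eq_zero, dite_false, PreL2.inner_eq, PreL2.koopman_apply]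
    rw [← hM.E_mul_left (abs_pos.2 hx) (f := fun q => f q * g (|x⁻¹| * q)) (by fun_prop)]
    simp_rw [abs_inv, inv_mul_cancel_left₀ (abs_ne_zero.2 hx)]

theorem dilationRep_apply {x : ℚ} (hx : x ≠ 0) (f : PreL2 M) (q : ℚ) :
    hM.dilationRep x f q = f (|x| * q) := by
  change (if hx : x = 0 then 0 else PreL2.koopman (|x| * ·) _) f q = _
  rw [dif_neg hx, PreL2.koopman_apply]

theorem frequently_E_dilate_mul_ne_zero {W : ℚ → ℝ} (hW : IsBddFun W) (hWM : M.E W ≠ 0) {ε κ : ℚ}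
    (hε : ε ≠ 0) (hκ : κ ≠ 0) :
    ∃ᶠ t in cofinite, M.E (fun q => W (|κ * (t / (t ^ 2 - ε))| * q) * W q) ≠ 0 := by
  obtain ⟨L, hL⟩ := exists_isShiftInvariant
  let v : PreL2 M := ⟨W, hW⟩
  let e : PreL2 M := ⟨fun _ => 1, .const 1⟩
  have he : hM.dilationRep.completion.IsInvariant e := fun x hx => by
    rw [UnitaryRep.completion_apply_coe]
    congr 1
    ext q
    rw [hM.dilationRep_apply hx]
  have hve : inner ℝ (v : UniformSpace.Completion (PreL2 M)) e ≠ 0 := by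
    rw [UniformSpace.Completion.inner_coe, PreL2.inner_eq]
    simpa only [v, e, mul_one] using hWM
  refine (hM.dilationRep.completion.frequently_inner_apply_linDiv_ne_zero
    (hM.isAffine_symm_quotientMean hL) hL hε hκ he hve).mono fun t ht => ?_
  have hx : κ * (t / (t ^ 2 - ε)) ≠ 0 := by
    rintro h
    rw [h, map_zero, zero_apply, inner_zero_left] at ht
    exact ht rfl
  rw [UnitaryRep.completion_apply_coe, UniformSpace.Completion.inner_coe, PreL2.inner_eq] at ht
  simpa only [hM.dilationRep_apply hx] using ht

end IsMulInvariant

end Mean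

end Dilation

section Density

theorem exists_nat_eq_mul_den {q : ℚ} (hq : 0 < q) : ∃ k : ℕ, 0 < k ∧ q * q.den = k :=
  ⟨q.num.toNat, by simpa using hq, by
    rw [Rat.mul_den_eq_num, ← Int.cast_natCast, Int.toNat_of_nonneg (Rat.num_nonneg.2 hq.le)]⟩

namespace Mean

theorem IsMulInvariant.map_natCast {μ : Mean ℕ}
    (hcongr : ∀ ⦃f g : ℕ → ℝ⦄, (∀ n, 0 < n → f n = g n) → μ.E f = μ.E g)
    (hmul : ∀ k, 0 < k → ∀ ⦃f : ℕ → ℝ⦄, IsBddFun f → μ.E (fun n => f (k * n)) = μ.E f) :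
    (μ.map ((↑) : ℕ → ℚ)).IsMulInvariant where
  E_congr _ _ h := hcongr h
  E_mul_left q hq f hf := by
    obtain ⟨k, hk, hqk⟩ := exists_nat_eq_mul_den hq
    calc μ.E (fun n => f (q * n))
        = μ.E (fun n => f (q * (q.den * n : ℕ))) :=
          (hmul q.den q.den_pos (f := fun n => f (q * n)) (by fun_prop)).symm
      _ = μ.E (fun n => f (k * n : ℕ)) := by
          simp_rw [Nat.cast_mul, ← mul_assoc, hqk]
      _ = μ.E (fun n => f n) := hmul k hk (f := fun n => f n) (by fun_prop)

end Mean

theorem isBddFun_indicator_one (s : Set X) : IsBddFun (s.indicator (1 : X → ℝ)) :=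
  ⟨1, fun x => by by_cases hx : x ∈ s <;> simp [hx]⟩

theorem IsMulFolner.exists_isMulInvariant {Φ : ℕ → Finset ℕ} (hΦ : IsMulFolner Φ) {Λ : Set ℕ}
    (hΛ : 0 < upMulDens Φ Λ) :
    ∃ M : Mean ℚ, M.IsMulInvariant ∧ 0 < M.E (((↑) '' Λ : Set ℚ).indicator 1) := by
  classical
  obtain ⟨hne, hpos, hdil⟩ := hΦ
  set δ := upMulDens Φ Λ / 2
  have hfreq : ∃ᶠ K in atTop, δ < #{n ∈ Φ K | n ∈ Λ} / (#(Φ K) : ℝ) := by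
    refine frequently_lt_of_lt_limsup
      (isCoboundedUnder_le_of_le atTop (x := 0) fun K => by positivity) ?_
    exact half_lt_self hΛ
  have := frequently_iff_neBot.1 hfreq
  obtain ⟨U, hU⟩ := Ultrafilter.exists_le (atTop ⊓ 𝓟 {K | δ < #{n ∈ Φ K | n ∈ Λ} / (#(Φ K) : ℝ)})
  refine ⟨(Mean.limUniform U Φ hne).map (↑), .map_natCast
    (fun f g h => Mean.limUniform_E_congr hne fun K n hn => h n (hpos K n hn))
    fun k hk f hf => Mean.limUniform_E_comp hne (mul_right_injective₀ hk.ne')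
      ((hdil k hk).mono_left (hU.trans inf_le_left)) hf,
    (half_pos hΛ).trans_le (Mean.le_limUniform_E hne ((isBddFun_indicator_one _).comp _) ?_)⟩
  filter_upwards [le_principal_iff.1 (hU.trans inf_le_right)] with K hK
  refine hK.le.trans_eq ?_
  simp [expect_eq_sum_div_card, Set.indicator_apply]

end Density

section Arithmetic

theorem eventually_abs_mul_div_sq_sub_ne_one (ε κ : ℚ) :
    ∀ᶠ t in cofinite, |κ * (t / (t ^ 2 - ε))| ≠ 1 := by
  filter_upwards [eventually_sq_sub_ne_zero ε, eventually_quadratic_ne_zero (-κ) (-ε),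
    eventually_quadratic_ne_zero κ (-ε)] with t hε h₁ h₂ habs
  rw [← mul_div_assoc] at habs
  obtain h | h := eq_or_eq_neg_of_abs_eq habs
  · rw [div_eq_iff hε] at h
    exact h₁ (by linear_combination -h)
  · rw [div_eq_iff hε] at h
    exact h₂ (by linear_combination h)

namespace Mean.IsMulInvariant

variable {M : Mean ℚ} (hM : M.IsMulInvariant) {S : Set ℕ}
  (hS : M.E (((↑) '' S : Set ℚ).indicator 1) ≠ 0)

include hM hS

theorem frequently_exists_eq_mul {ε κ : ℚ} (hε : ε ≠ 0) (hκ : κ ≠ 0) :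
    ∃ᶠ t in cofinite, ∀ ζ : ℚ, 0 < ζ → ∃ x ∈ S, ∃ y ∈ S, x ≠ y ∧ ∃ z : ℕ, 0 < z ∧
      (x : ℚ) = |κ * (t / (t ^ 2 - ε))| * y ∧ (z : ℚ) = ζ * y := by
  have hW := isBddFun_indicator_one ((↑) '' S : Set ℚ)
  refine ((hM.frequently_E_dilate_mul_ne_zero hW hS hε hκ).and_eventually
    (eventually_abs_mul_div_sq_sub_ne_one ε κ)).mono fun t ⟨ht, ht₁⟩ ζ hζ => ?_
  have hden : (0 : ℚ) < ζ.den := by exact_mod_cast ζ.den_pos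
  obtain ⟨n, hn, hne⟩ := hM.exists_nat_of_E_ne_zero (by fun_prop) ht hden
  obtain ⟨x, hx, hxn⟩ := Set.mem_of_indicator_ne_zero (left_ne_zero_of_mul hne)
  obtain ⟨y, hy, hyn⟩ := Set.mem_of_indicator_ne_zero (right_ne_zero_of_mul hne)
  rw [← hyn] at hxn
  obtain ⟨k, hk, hζk⟩ := exists_nat_eq_mul_den hζ
  refine ⟨x, hx, y, hy, ?_, k * n, Nat.mul_pos hk hn, hxn, ?_⟩
  · rintro rfl
    have hx₀ : (x : ℚ) ≠ 0 := hyn ▸ by positivity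
    exact ht₁ (mul_right_cancel₀ hx₀ (by rw [← hxn, one_mul]))
  · rw [hyn, ← mul_assoc, hζk, Nat.cast_mul]

variable {α β γ : ℕ} (hα : 0 < α) (hβ : 0 < β) (hγ : 0 < γ)

include hα hβ hγ

theorem exists_legs_mem : ∃ x ∈ S, ∃ y ∈ S, x ≠ y ∧ ∃ z : ℕ, 0 < z ∧
    α * α * x ^ 2 + β * β * y ^ 2 = γ * γ * z ^ 2 := by
  obtain ⟨t, ht, ht₁⟩ := ((hM.frequently_exists_eq_mul hS (ε := 1) (κ := 2 * β / α)
    one_ne_zero (by positivity)).and_eventually (eventually_sq_sub_ne_zero 1)).exists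
  obtain ⟨x, hx, y, hy, hne, z, hz, hxy, hzy⟩ :=
    ht (β / γ * |(t ^ 2 + 1) / (t ^ 2 - 1)|) (by positivity)
  have h : (α * α * x ^ 2 + β * β * y ^ 2 : ℚ) = γ * γ * z ^ 2 := by
    rw [hxy, hzy, mul_pow, mul_pow, mul_pow, sq_abs, sq_abs]
    field_simp
    ring
  exact ⟨x, hx, y, hy, hne, z, hz, by exact_mod_cast h⟩

theorem exists_leg_hypotenuse_mem : ∃ y ∈ S, ∃ z ∈ S, y ≠ z ∧ ∃ x : ℕ, 0 < x ∧
    α * α * x ^ 2 + β * β * y ^ 2 = γ * γ * z ^ 2 := by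
  obtain ⟨t, ht, ht₁⟩ := ((hM.frequently_exists_eq_mul hS (ε := -1) (κ := 2 * γ / β)
    (by norm_num) (by positivity)).and_eventually (eventually_sq_sub_ne_zero 1)).exists
  obtain ⟨y, hy, z, hz, hne, x, hx, hyz, hxz⟩ :=
    ht (γ / α * |(t ^ 2 - 1) / (t ^ 2 + 1)|) (by positivity)
  have h : (α * α * x ^ 2 + β * β * y ^ 2 : ℚ) = γ * γ * z ^ 2 := by
    rw [hyz, hxz, sub_neg_eq_add, mul_pow, mul_pow, mul_pow, sq_abs, sq_abs]
    field_simp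
    ring
  exact ⟨y, hy, z, hz, hne, x, hx, by exact_mod_cast h⟩

end Mean.IsMulInvariant

end Arithmetic

/-- **Density regularity of Pythagorean pairs** (Theorem 1.2). If `a, b, c` are positive
perfect squares and `Λ` has positive multiplicative density, then (1) there are distinct
`x, y ∈ Λ` and some `z` with `a x² + b y² = c z²`, and (2) there are distinct
`y, z ∈ Λ` and some `x` with `a x² + b y² = c z²`. -/
theorem pythagorean_pairs_density
    (a b c : ℕ) (ha : 0 < a) (hb : 0 < b) (hc : 0 < c)
    (hasq : IsSquare a) (hbsq : IsSquare b) (hcsq : IsSquare c)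
    (Λ : Set ℕ) (hΛpos : ∀ n ∈ Λ, 0 < n)
    (Φ : ℕ → Finset ℕ) (hΦ : IsMulFolner Φ) (hdens : 0 < upMulDens Φ Λ) :
    (∃ x ∈ Λ, ∃ y ∈ Λ, x ≠ y ∧ ∃ z : ℕ, 0 < z ∧ a * x ^ 2 + b * y ^ 2 = c * z ^ 2) ∧
    (∃ y ∈ Λ, ∃ z ∈ Λ, y ≠ z ∧ ∃ x : ℕ, 0 < x ∧ a * x ^ 2 + b * y ^ 2 = c * z ^ 2) := by
  obtain ⟨α, rfl⟩ := hasq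
  obtain ⟨β, rfl⟩ := hbsq
  obtain ⟨γ, rfl⟩ := hcsq
  obtain ⟨M, hM, hMΛ⟩ := hΦ.exists_isMulInvariant hdens
  have hα : 0 < α := Nat.pos_of_mul_pos_left ha
  have hβ : 0 < β := Nat.pos_of_mul_pos_left hb
  have hγ : 0 < γ := Nat.pos_of_mul_pos_left hc
  exact ⟨hM.exists_legs_mem hMΛ.ne' hα hβ hγ, hM.exists_leg_hypotenuse_mem hMΛ.ne' hα hβ hγ⟩
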